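/- arXiv:2508.07097 — 2 statements merged into one kernel-verified Lean document; each statement's English description precedes it below -/
import Mathlib

section
/- Let φ: (R,m,k) → (S,n,ℓ) be a flat local ring homomorphism between commutative Noetherian local rings which is essentially of finite type and complete intersection at n, let M be a finitely generated S-module, and assume the residue field ℓ is separable over k. If CI*-fd_R M < ∞, then CI*-dim_S M < ∞. -/
/-!
Common definitions: André–Quillen homology via the standard (comonad/polynomial)
simplicial resolution, complete-intersection (flat) dimensions via quasi-deformations,
Cohen factorizations, Koszul homology `H₁`, and related notions.
-/

universe u

open TensorProduct IsLocalRing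

noncomputable section

/-! ### Flat and projective dimension -/

/-- `FlatDimLE Q n N` : the `Q`-module `N` has flat dimension at most `n`,
i.e. it admits a flat resolution of length at most `n`. -/
def FlatDimLE (Q : Type u) [CommRing Q] : ℕ → (N : Type u) → [AddCommGroup N] → [Module Q N] → Prop
  | 0, N, _, _ => Module.Flat Q N
  | n+1, N, _, _ =>
      ∃ (F : Type u) (_ : AddCommGroup F) (_ : Module Q F) (f : F →ₗ[Q] N),
        Module.Flat Q F ∧ Function.Surjective f ∧ FlatDimLE Q n (LinearMap.ker f)

/-- `ProjDimLE Q n N` : the `Q`-module `N` has projective dimension at most `n`. -/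
def ProjDimLE (Q : Type u) [CommRing Q] : ℕ → (N : Type u) → [AddCommGroup N] → [Module Q N] → Prop
  | 0, N, _, _ => Module.Projective Q N
  | n+1, N, _, _ =>
      ∃ (F : Type u) (_ : AddCommGroup F) (_ : Module Q F) (f : F →ₗ[Q] N),
        Module.Projective Q F ∧ Function.Surjective f ∧ ProjDimLE Q n (LinearMap.ker f)

/-- The flat dimension `fd_Q N` is finite. -/
def FlatDimFinite (Q : Type u) [CommRing Q] (N : Type u) [AddCommGroup N] [Module Q N] : Prop :=
  ∃ n : ℕ, FlatDimLE Q n N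

/-- The projective dimension `pd_Q N` is finite. -/
def ProjDimFinite (Q : Type u) [CommRing Q] (N : Type u) [AddCommGroup N] [Module Q N] : Prop :=
  ∃ n : ℕ, ProjDimLE Q n N

/-! ### Regular sequences, regular local rings, complete intersection conditions -/

/-- The ideal `I` is generated by an `A`-regular sequence. -/
def GeneratedByRegularSequence (A : Type u) [CommRing A] (I : Ideal A) : Prop :=
  ∃ rs : List A, RingTheory.Sequence.IsRegular A rs ∧ Ideal.span {x | x ∈ rs} = I

/-- A (Noetherian local) ring is regular iff its maximal ideal is generated by a
regular sequence. -/
def IsRegularLocal (A : Type u) [CommRing A] : Prop :=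
  IsNoetherianRing A ∧
    ∃ h : IsLocalRing A, GeneratedByRegularSequence A (@IsLocalRing.maximalIdeal A _ h)

/-- A local homomorphism is weakly regular if it is flat with regular closed fibre. -/
def IsWeaklyRegularHom (A B : Type u) [CommRing A] [CommRing B] [IsLocalRing A]
    (f : A →+* B) : Prop :=
  IsLocalHom f ∧ (letI := f.toAlgebra; Module.Flat A B) ∧
    IsRegularLocal (B ⧸ Ideal.map f (maximalIdeal A))

/-- `R'' → f → g` is a Cohen factorization of the semi-completion of `ψ : A → B`
with respect to the (maximal) ideal `J` of `B`:  `A → R'' → B̂` with `A → R''`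
weakly regular, `R''` complete Noetherian local and `R'' → B̂` surjective local. -/
def IsCohenFactorizationAt (A B : Type u) [CommRing A] [CommRing B] [IsLocalRing A]
    (ψ : A →+* B) (J : Ideal B) (R'' : Type u) [CommRing R'']
    (f : A →+* R'') (g : R'' →+* AdicCompletion J B) : Prop :=
  g.comp f = (algebraMap B (AdicCompletion J B)).comp ψ ∧
  IsNoetherianRing R'' ∧
  (∃ h : IsLocalRing R'', IsAdicComplete (@IsLocalRing.maximalIdeal R'' _ h) R'') ∧
  IsWeaklyRegularHom A R'' f ∧
  Function.Surjective g ∧ IsLocalHom g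

/-- `ψ : A → B` is complete intersection (c.i.) at the ideal `J` (typically the
maximal ideal of `B`): in a Cohen factorization `A → R'' → B̂` of the
semi-completion of `ψ`, the kernel of `R'' → B̂` is generated by a regular sequence. -/
def IsCIAt (A B : Type u) [CommRing A] [CommRing B] [IsLocalRing A]
    (ψ : A →+* B) (J : Ideal B) : Prop :=
  ∃ (R'' : Type u) (_ : CommRing R'') (f : A →+* R'') (g : R'' →+* AdicCompletion J B),
    IsCohenFactorizationAt A B ψ J R'' f g ∧ GeneratedByRegularSequence R'' (RingHom.ker g)

/-- A Noetherian local ring is a complete intersection if its completion is the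
quotient of a complete regular local ring by an ideal generated by a regular sequence. -/
def IsCompleteIntersectionRing (A : Type u) [CommRing A] : Prop :=
  IsNoetherianRing A ∧
  ∃ h : IsLocalRing A,
    ∃ (Q : Type u) (_ : CommRing Q)
      (g : Q →+* AdicCompletion (@IsLocalRing.maximalIdeal A _ h) A),
      IsRegularLocal Q ∧ (∃ hq : IsLocalRing Q, IsAdicComplete (@IsLocalRing.maximalIdeal Q _ hq) Q) ∧
      Function.Surjective g ∧ GeneratedByRegularSequence Q (RingHom.ker g)

/-! ### Complete intersection (flat) dimensions via quasi-deformations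

`R → R' ← Q` is a quasi-deformation when `R → R'` is flat local and `Q → R'` is
surjective local with kernel generated by a `Q`-regular sequence (all rings
Noetherian local).  The various complete intersection (flat) dimensions
`CI-fd`, `CI-dim`, `CI*-fd`, `CI*-dim`, `cidim-fd`, `cidim` of a module `M` are
`inf { fd_Q(R' ⊗_R M) - pd_Q R' }` over (upper / complete intersection)
quasi-deformations; such a dimension is finite iff there is a quasi-deformation
of the appropriate kind for which both `fd_Q (R' ⊗_R M)` and `pd_Q R'` are finite. -/

/-- The conditions on `R → R' ← Q` making it a quasi-deformation. -/
def IsQuasiDeformation (R R' Q : Type u) [CommRing R] [CommRing R'] [CommRing Q]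
    (f : R →+* R') (g : Q →+* R') : Prop :=
  IsLocalRing R' ∧ IsLocalRing Q ∧ IsNoetherianRing R' ∧ IsNoetherianRing Q ∧
  IsLocalHom f ∧ IsLocalHom g ∧ (letI := f.toAlgebra; Module.Flat R R') ∧
  Function.Surjective g ∧ GeneratedByRegularSequence Q (RingHom.ker g)

/-- `CI-fd_R M < ∞` (equivalently, for finitely generated `M`, `CI-dim_R M < ∞`):
there is a quasi-deformation `R → R' ← Q` with `fd_Q (R' ⊗_R M)` and `pd_Q R'` finite. -/
def HasFiniteCIDim (R : Type u) [CommRing R] (M : Type u) [AddCommGroup M] [Module R M] : Prop :=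
  ∃ (R' Q : Type u) (_ : CommRing R') (_ : CommRing Q) (f : R →+* R') (g : Q →+* R'),
    IsQuasiDeformation R R' Q f g ∧
    (letI := f.toAlgebra;
     letI := g.toAlgebra;
     letI : Module Q (R' ⊗[R] M) := Module.compHom _ g;
     FlatDimFinite Q (R' ⊗[R] M) ∧ ProjDimFinite Q R')

/-- `CI*-fd_R M < ∞` (resp. `CI*-dim_R M < ∞`): as in `HasFiniteCIDim` but over
upper quasi-deformations, i.e. `R → R'` is weakly regular. -/
def HasFiniteUpperCIDim (R : Type u) [CommRing R] [IsLocalRing R]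
    (M : Type u) [AddCommGroup M] [Module R M] : Prop :=
  ∃ (R' Q : Type u) (_ : CommRing R') (_ : CommRing Q) (f : R →+* R') (g : Q →+* R'),
    IsQuasiDeformation R R' Q f g ∧ IsWeaklyRegularHom R R' f ∧
    (letI := f.toAlgebra;
     letI := g.toAlgebra;
     letI : Module Q (R' ⊗[R] M) := Module.compHom _ g;
     FlatDimFinite Q (R' ⊗[R] M) ∧ ProjDimFinite Q R')

/-- `cidim-fd_R M < ∞` (resp. `cidim_R M < ∞`): as in `HasFiniteCIDim` but over
complete intersection quasi-deformations, i.e. `R → R'` is c.i. at the maximal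
ideal of `R'`. -/
def HasFiniteCIQDDim (R : Type u) [CommRing R] [IsLocalRing R]
    (M : Type u) [AddCommGroup M] [Module R M] : Prop :=
  ∃ (R' Q : Type u) (_ : CommRing R') (_ : CommRing Q) (hR' : IsLocalRing R')
    (f : R →+* R') (g : Q →+* R'),
    IsQuasiDeformation R R' Q f g ∧
    IsCIAt R R' f (@IsLocalRing.maximalIdeal R' _ hR') ∧
    (letI := f.toAlgebra;
     letI := g.toAlgebra;
     letI : Module Q (R' ⊗[R] M) := Module.compHom _ g;
     FlatDimFinite Q (R' ⊗[R] M) ∧ ProjDimFinite Q R')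

/-! ### André–Quillen homology

`D_n(S|R, M)` is defined as the `n`-th homology of `L ⊗_S M`, where `L` is the
cotangent complex of the `R`-algebra `S`: the complex associated to the standard
simplicial resolution `X` of `S` by polynomial `R`-algebras (the comonad
resolution `X_n = G^{n+1} S`, `G A = R[A]`), with `L_n = S ⊗_{X_n} Ω_{X_n/R}`
the free `S`-module on the variables of `X_n` and differentials the alternating
sums of the maps induced by the face maps. -/

/-- `AQV R S n` is, for `n ≥ 1`, the `n`-th ring in the standard simplicial
polynomial resolution of `S` over `R` (and `AQV R S 0 = S` as an index set). -/
def AQV (R S : Type u) [CommRing R] : ℕ → Type u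
  | 0 => S
  | n+1 => MvPolynomial (AQV R S n) R

noncomputable instance (R S : Type u) [CommRing R] (n : ℕ) : CommRing (AQV R S (n+1)) :=
  inferInstanceAs (CommRing (MvPolynomial (AQV R S n) R))

noncomputable instance (R S : Type u) [CommRing R] (n : ℕ) : Algebra R (AQV R S (n+1)) :=
  inferInstanceAs (Algebra R (MvPolynomial (AQV R S n) R))

/-- The augmentations `X_n → S` of the standard resolution. -/
def AQaug (R S : Type u) [CommRing R] [CommRing S] [Algebra R S] :
    (n : ℕ) → (AQV R S (n+1) →ₐ[R] S)
  | 0 => MvPolynomial.aeval (id : S → S)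
  | n+1 => MvPolynomial.aeval (fun v : AQV R S (n+1) => AQaug R S n v)

/-- The face maps `dᵢ : X_{n+1} → X_n` of the standard resolution: `d₀` is the
counit and `d_{i+1} = G(dᵢ)`. -/
def AQface (R S : Type u) [CommRing R] [CommRing S] [Algebra R S] :
    (n : ℕ) → (i : ℕ) → (AQV R S (n+2) →ₐ[R] AQV R S (n+1))
  | n, 0 => MvPolynomial.aeval (id : AQV R S (n+1) → AQV R S (n+1))
  | 0, _+1 => MvPolynomial.rename ⇑(AQaug R S 0)
  | n+1, i+1 => MvPolynomial.rename ⇑(AQface R S n i)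

variable (R S : Type u) [CommRing R] [CommRing S] [Algebra R S]
variable (M : Type u) [AddCommGroup M] [Module S M]

/-- The map `L_{n+1} ⊗ M → L_n ⊗ M` induced by an `R`-algebra map
`f : X_{n+1} → X_n` on the (base-changed) Kähler differentials: the free module
on the variables `v` of `X_{n+1}` maps by `e_v ↦ ∑_w aug(∂(f Xᵥ)/∂w) • e_w`. -/
def AQind (n : ℕ) (f : AQV R S (n+2) →ₐ[R] AQV R S (n+1)) :
    (AQV R S (n+1) →₀ M) →ₗ[S] (AQV R S n →₀ M) :=
  Finsupp.lsum S fun v : AQV R S (n+1) =>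
    letI : DecidableEq (AQV R S n) := Classical.decEq _
    let P : MvPolynomial (AQV R S n) R := f (MvPolynomial.X v)
    ∑ w ∈ P.vars,
      (Finsupp.lsingle w).comp
        ((AQaug R S n ((MvPolynomial.pderiv w) P) : S) • (LinearMap.id : M →ₗ[S] M))

/-- The differential `L_{n+1} ⊗ M → L_n ⊗ M` of the cotangent complex:
the alternating sum of the maps induced by the face maps. -/
def AQdiff (n : ℕ) : (AQV R S (n+1) →₀ M) →ₗ[S] (AQV R S n →₀ M) :=
  ∑ i ∈ Finset.range (n+2), ((-1 : ℤ)^i) • AQind R S M n (AQface R S n i)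

/-- Cycles of the cotangent complex with coefficients in `M`. -/
def AQcycles : (n : ℕ) → Submodule S (AQV R S n →₀ M)
  | 0 => ⊤
  | n+1 => LinearMap.ker (AQdiff R S M n)

/-- André–Quillen homology `D_n(S|R, M)`. -/
def AQH (n : ℕ) : Type u :=
  AQcycles R S M n ⧸
    (LinearMap.range (AQdiff R S M n)).comap (AQcycles R S M n).subtype

noncomputable instance (n : ℕ) : AddCommGroup (AQH R S M n) :=
  inferInstanceAs (AddCommGroup (AQcycles R S M n ⧸
    (LinearMap.range (AQdiff R S M n)).comap (AQcycles R S M n).subtype))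

/-- `AQdimLE R S d`: the André–Quillen dimension of the `R`-algebra `S` is at
most `d`, i.e. `D_n(S|R, -) = 0` for all `n > d`. -/
def AQdimLE (d : ℕ) : Prop :=
  ∀ n : ℕ, d < n → ∀ (N : Type u) (iN : AddCommGroup N) (mN : Module S N),
    Subsingleton (@AQH R S _ _ _ N iN mN n)

/-- `AQ-dim_R S < ∞`. -/
def AQdimFinite : Prop := ∃ d : ℕ, AQdimLE R S d

/-! ### Koszul homology `H₁` -/

/-- First differential of the Koszul complex on `x : Fin c → A`. -/
def koszulD1 (A : Type u) [CommRing A] {c : ℕ} (x : Fin c → A) : (Fin c → A) →ₗ[A] A :=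
  ∑ i, x i • (LinearMap.proj i : ((Fin c → A)) →ₗ[A] A)

/-- One-cycles of the Koszul complex on `x`. -/
def koszulZ1 (A : Type u) [CommRing A] {c : ℕ} (x : Fin c → A) : Submodule A (Fin c → A) :=
  LinearMap.ker (koszulD1 A x)

/-- One-boundaries of the Koszul complex on `x` (the image of the second Koszul
differential, spanned by the elements `xᵢ eⱼ - xⱼ eᵢ`). -/
def koszulB1 (A : Type u) [CommRing A] {c : ℕ} (x : Fin c → A) : Submodule A (Fin c → A) :=
  Submodule.span A
    {v : Fin c → A | ∃ i j, v =
      x i • (Pi.single j (1 : A) : Fin c → A) - x j • (Pi.single i (1 : A) : Fin c → A)}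

/-- First Koszul homology of the sequence `x : Fin c → A`. -/
def KoszulH1 (A : Type u) [CommRing A] {c : ℕ} (x : Fin c → A) : Type u :=
  koszulZ1 A x ⧸ (koszulB1 A x).comap (koszulZ1 A x).subtype

noncomputable instance (A : Type u) [CommRing A] {c : ℕ} (x : Fin c → A) :
    AddCommGroup (KoszulH1 A x) :=
  inferInstanceAs (AddCommGroup (koszulZ1 A x ⧸ (koszulB1 A x).comap (koszulZ1 A x).subtype))

noncomputable instance (A : Type u) [CommRing A] {c : ℕ} (x : Fin c → A) :
    Module A (KoszulH1 A x) :=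
  inferInstanceAs (Module A (koszulZ1 A x ⧸ (koszulB1 A x).comap (koszulZ1 A x).subtype))

/-- `H₁(K(σ))` is a free `T̂`-module:  for any Cohen factorization
`S → S'' → T̂` of the semi-completion of `σ` and any finite generating set `x` of
`ker (S'' → T̂)`, the first Koszul homology of `x`, base-changed to `T̂`
(it is killed by `ker (S'' → T̂)`), is a free `T̂`-module. -/
def KoszulH1FreeHom (S T : Type u) [CommRing S] [CommRing T] [IsLocalRing S] [IsLocalRing T]
    (σ : S →+* T) : Prop :=
  ∀ (S'' : Type u) (_ : CommRing S'') (f : S →+* S'')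
    (g : S'' →+* AdicCompletion (maximalIdeal T) T),
    IsCohenFactorizationAt S T σ (maximalIdeal T) S'' f g →
    ∀ (c : ℕ) (x : Fin c → S''), Ideal.span (Set.range x) = RingHom.ker g →
      (letI := g.toAlgebra;
       Module.Free (AdicCompletion (maximalIdeal T) T)
         ((AdicCompletion (maximalIdeal T) T) ⊗[S''] (KoszulH1 S'' x)))

/-! ### Separability (MacLane) -/

/-- A field extension `ℓ/k` is separable (in the sense of MacLane, allowing
non-algebraic extensions) iff `K ⊗_k ℓ` is reduced for every field extension `K/k`. -/
def IsSeparableFieldExtension (k ℓ : Type u) [Field k] [Field ℓ] [Algebra k ℓ] : Prop :=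
  ∀ (K : Type u) (_ : Field K) (_ : Algebra k K), IsReduced (K ⊗[k] ℓ)

end


variable (R S M : Type u) [CommRing R] [CommRing S]
  [IsLocalRing R] [IsLocalRing S] [IsNoetherianRing R] [IsNoetherianRing S]
  [Algebra R S] [IsLocalHom (algebraMap R S)]
  [AddCommGroup M] [Module R M] [Module S M] [IsScalarTower R S M] [Module.Finite S M]

/-!
Write `S` as a quotient of a localization `A` of some `R[X₁, …, Xₙ]`, and let `R → B → Ŝ` be a Cohen
factorization. A localization `D` of `B ⊗[R] A` maps onto `Ŝ` with kernel generated by a regular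
sequence, and it is flat over `A` with closed fibre regular by separability of the residue field
extension; hence the kernel of `A → S` is generated by a regular sequence as well.

Given an upper quasi-deformation `R → R' ← Q` for `M`, localize `R' ⊗[R] S` at a prime lying over
the maximal ideal of `S` for which, again by separability, `S → S'` is weakly regular. The ring
`S'` is a quotient of a localization `Q'` of `Q[X₁, …, Xₙ]` in two steps, the first one coming from
`Q → R'` and the second one from `A → S`, and each has a kernel generated by a regular sequence;
hence so has `Q' → S'`. Finally `S' ⊗[S] M` is a localization of the module `R' ⊗[R] M`, on which
the variables act through `S`, and its flat dimension over `Q[X₁, …, Xₙ]` exceeds that over `Q` by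
at most `n`.
-/

/-! ### Flat and projective dimension -/

section FlatDimension

open CategoryTheory

variable {A : Type u} [CommRing A] {N : Type u} [AddCommGroup N] [Module A N]

section ShortExact

variable {K F : Type u} [AddCommGroup K] [Module A K] [AddCommGroup F] [Module A F]
  {i : K →ₗ[A] F} {f : F →ₗ[A] N}

lemma exact_characterModule_dual (hf : Function.Surjective f) (hif : Function.Exact i f) :
    Function.Exact (CharacterModule.dual f) (CharacterModule.dual i) := by
  refine fun c ↦ ⟨fun hc ↦ ?_, ?_⟩
  · have hker : f.toAddMonoidHom.ker ≤ c.ker := by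
      intro x hx
      obtain ⟨y, rfl⟩ := (hif x).1 hx
      exact DFunLike.congr_fun hc y
    refine ⟨AddMonoidHom.liftOfSurjective f.toAddMonoidHom hf ⟨c, hker⟩, ?_⟩
    ext x
    exact DFunLike.congr_fun
      (AddMonoidHom.liftOfRightInverse_comp f.toAddMonoidHom _ _ ⟨c, hker⟩) x
  · rintro ⟨d, rfl⟩
    ext x
    change d (f (i x)) = 0
    rw [hif.apply_apply_eq_zero, map_zero]

lemma shortExact_characterModule_dual (hi : Function.Injective i) (hf : Function.Surjective f)
    (hif : Function.Exact i f) :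
    (ModuleCat.shortComplexOfCompEqZero (CharacterModule.dual f) (CharacterModule.dual i)
      (exact_characterModule_dual hf hif).linearMap_comp_eq_zero).ShortExact :=
  ModuleCat.shortComplex_shortExact _ (exact_characterModule_dual hf hif)
    (CharacterModule.dual_injective_of_surjective f hf)
    (CharacterModule.dual_surjective_of_injective i hi)

end ShortExact

lemma flatDimLE_iff_hasInjectiveDimensionLE_characterModule {n : ℕ} :
    FlatDimLE A n N ↔ HasInjectiveDimensionLE (ModuleCat.of A (CharacterModule N)) n := by
  induction n generalizing N with
  | zero =>
    change Module.Flat A N ↔ HasInjectiveDimensionLT _ (0 + 1)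
    rw [Module.Flat.iff_characterModule_injective, zero_add,
      ← injective_iff_hasInjectiveDimensionLT_one, Module.injective_iff_injective_object]
  | succ n ih =>
    have dimension_shift (F : Type u) [AddCommGroup F] [Module A F] (f : F →ₗ[A] N)
        [Module.Flat A F] (hf : Function.Surjective f) : FlatDimLE A n (LinearMap.ker f) ↔
          HasInjectiveDimensionLE (ModuleCat.of A (CharacterModule N)) (n + 1) :=
      ih.trans <| (shortExact_characterModule_dual (Submodule.subtype_injective _) hf
        f.exact_subtype_ker_map).hasInjectiveDimensionLT_X₃_iff n <|
          (Module.injective_iff_injective_object A _).1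
            (Module.Flat.iff_characterModule_injective.1 ‹_›)
    constructor
    · rintro ⟨F, _, _, f, hF, hf, h⟩
      exact (dimension_shift F f hf).1 h
    · intro h
      have hf := Finsupp.linearCombination_id_surjective A N
      exact ⟨N →₀ A, inferInstance, inferInstance, _, inferInstance, hf,
        (dimension_shift _ _ hf).2 h⟩

lemma projDimLE_iff_hasProjectiveDimensionLE {n : ℕ} :
    ProjDimLE A n N ↔ HasProjectiveDimensionLE (ModuleCat.of A N) n := by
  induction n generalizing N with
  | zero =>
    change Module.Projective A N ↔ HasProjectiveDimensionLT _ (0 + 1)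
    rw [zero_add, ← projective_iff_hasProjectiveDimensionLT_one, IsProjective.iff_projective]
  | succ n ih =>
    have dimension_shift (F : Type u) [AddCommGroup F] [Module A F] (f : F →ₗ[A] N)
        [Module.Projective A F] (hf : Function.Surjective f) : ProjDimLE A n (LinearMap.ker f) ↔
          HasProjectiveDimensionLE (ModuleCat.of A N) (n + 1) :=
      ih.trans ((LinearMap.shortExact_shortComplexKer hf).hasProjectiveDimensionLT_X₃_iff n
        ((IsProjective.iff_projective F).1 ‹_›)).symm
    constructor
    · rintro ⟨F, _, _, f, hF, hf, h⟩
      exact (dimension_shift F f hf).1 h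
    · intro h
      have hf := Finsupp.linearCombination_id_surjective A N
      exact ⟨N →₀ A, inferInstance, inferInstance, _, inferInstance, hf,
        (dimension_shift _ _ hf).2 h⟩

lemma projDimFinite_of_generatedByRegularSequence_ker [IsLocalRing A] [IsNoetherianRing A]
    {B : Type u} [CommRing B] [Algebra A B] (hsurj : Function.Surjective (algebraMap A B))
    (hker : GeneratedByRegularSequence A (RingHom.ker (algebraMap A B))) : ProjDimFinite A B := by
  obtain ⟨rs, hrs, hspan⟩ := hker
  refine ⟨rs.length, projDimLE_iff_hasProjectiveDimensionLE.2 ?_⟩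
  have := (projectiveDimension_le_iff _ _).1
    (ModuleCat.projectiveDimension_quotient_eq_length.{u} rs hrs).le
  let e : Shrink.{u} (A ⧸ Ideal.ofList rs) ≃ₗ[A] B :=
    Shrink.linearEquiv A (A ⧸ Ideal.ofList rs) ≪≫ₗ Submodule.quotEquivOfEq _ _ hspan ≪≫ₗ
      (Algebra.linearMap A B).quotKerEquivOfSurjective hsurj
  exact hasProjectiveDimensionLT_of_iso e.toModuleIso _

namespace FlatDimLE

lemma congr {n : ℕ} {N' : Type u} [AddCommGroup N'] [Module A N'] (e : N ≃ₗ[A] N')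
    (h : FlatDimLE A n N) : FlatDimLE A n N' := by
  rw [flatDimLE_iff_hasInjectiveDimensionLE_characterModule] at h ⊢
  exact (ModuleCat.hasInjectiveDimensionLE_iff_of_linearEquiv (CharacterModule.congr e) n).1 h

lemma succ {n : ℕ} (h : FlatDimLE A n N) : FlatDimLE A (n + 1) N := by
  rw [flatDimLE_iff_hasInjectiveDimensionLE_characterModule] at h ⊢
  exact hasInjectiveDimensionLT_of_ge _ (n + 1) (n + 1 + 1) (Nat.le_succ _)

lemma of_exact {n : ℕ} {K F : Type u} [AddCommGroup K] [Module A K] [AddCommGroup F] [Module A F]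
    {i : K →ₗ[A] F} {f : F →ₗ[A] N} (hi : Function.Injective i) (hf : Function.Surjective f)
    (hif : Function.Exact i f) (hK : FlatDimLE A n K) (hF : FlatDimLE A n F) :
    FlatDimLE A (n + 1) N := by
  have hF' := hF.succ
  rw [flatDimLE_iff_hasInjectiveDimensionLE_characterModule] at *
  exact (shortExact_characterModule_dual hi hf hif).hasInjectiveDimensionLT_X₁ (n + 1) hK hF'

lemma of_ringEquiv {B : Type u} [CommRing B] [Module B N] {n : ℕ} (e : A ≃+* B)
    (he : ∀ (a : A) (x : N), e a • x = a • x) (h : FlatDimLE A n N) : FlatDimLE B n N := by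
  rw [flatDimLE_iff_hasInjectiveDimensionLE_characterModule] at h ⊢
  let _ := RingHomInvPair.of_ringEquiv e
  let _ := RingHomInvPair.symm (e : A →+* B) (e.symm : B →+* A)
  let E : CharacterModule N ≃ₛₗ[RingHomClass.toRingHom e] CharacterModule N :=
    { AddEquiv.refl _ with
      map_smul' := fun a c ↦ by
        ext x
        change c (a • x) = c (e a • x)
        rw [he] }
  exact (ModuleCat.hasInjectiveDimensionLE_iff_of_semiLinearEquiv e E n).1 h

variable {B : Type u} [CommRing B] [Algebra A B] [Module.Flat A B]

lemma baseChange {n : ℕ} (h : FlatDimLE A n N) : FlatDimLE B n (B ⊗[A] N) := by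
  induction n generalizing N with
  | zero =>
    have : Module.Flat A N := h
    exact inferInstanceAs (Module.Flat B (B ⊗[A] N))
  | succ n ih =>
    obtain ⟨F, _, _, f, _, hf, hker⟩ := h
    refine ⟨B ⊗[A] F, inferInstance, inferInstance, f.baseChange B, inferInstance,
      LinearMap.lTensor_surjective B hf, ?_⟩
    let i := (LinearMap.ker f).subtype.baseChange B
    have hi : Function.Injective i :=
      Module.Flat.lTensor_preserves_injective_linearMap _ (Submodule.subtype_injective _)
    have hif : Function.Exact i (f.baseChange B) := lTensor_exact B f.exact_subtype_ker_map hf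
    exact (ih hker).congr (LinearEquiv.ofInjective i hi ≪≫ₗ
      LinearEquiv.ofEq _ _ hif.linearMap_ker_eq.symm)

lemma of_isBaseChange {n : ℕ} {N' : Type u} [AddCommGroup N'] [Module A N'] [Module B N']
    [IsScalarTower A B N'] {f : N →ₗ[A] N'} (hf : IsBaseChange B f) (h : FlatDimLE A n N) :
    FlatDimLE B n N' :=
  h.baseChange.congr hf.equiv

end FlatDimLE

end FlatDimension

section PolynomialRing

open Polynomial

variable {A : Type u} [CommRing A] {N : Type u} [AddCommGroup N] [Module A N]

variable (A N) in
/-- The coefficients of an element of `A[X] ⊗ N = N[X]`. -/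
noncomputable def polynomialTensorCoeff : A[X] ⊗[A] N ≃ₗ[A] ℕ →₀ N :=
  TensorProduct.equivFinsuppOfBasisLeft (Polynomial.basisMonomials A)

@[simp]
lemma polynomialTensorCoeff_tmul (p : A[X]) (n : N) (k : ℕ) :
    polynomialTensorCoeff A N (p ⊗ₜ n) k = p.coeff k • n := by
  simp only [polynomialTensorCoeff, TensorProduct.equivFinsuppOfBasisLeft_apply_tmul_apply]
  rfl

variable [Module A[X] N] [IsScalarTower A A[X] N]

variable (A N) in
/-- The first of the two maps in the exact sequence
`0 → A[X] ⊗ N → A[X] ⊗ N → N → 0` attached to an `A[X]`-module `N`, with all tensor products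
over `A`. -/
noncomputable def polynomialTensorDiff : A[X] ⊗[A] N →ₗ[A[X]] A[X] ⊗[A] N :=
  LinearMap.lsmul A[X] _ X - (Algebra.lsmul A A N (X : A[X])).baseChange A[X]

variable (A N) in
/-- The second of the two maps in the exact sequence
`0 → A[X] ⊗ N → A[X] ⊗ N → N → 0` attached to an `A[X]`-module `N`. -/
noncomputable def polynomialTensorAction : A[X] ⊗[A] N →ₗ[A[X]] N :=
  (LinearMap.id : N →ₗ[A] N).liftBaseChange A[X]

@[simp]
lemma polynomialTensorDiff_tmul (p : A[X]) (n : N) :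
    polynomialTensorDiff A N (p ⊗ₜ n) = (X * p) ⊗ₜ n - p ⊗ₜ ((X : A[X]) • n) := by
  simp [polynomialTensorDiff, TensorProduct.smul_tmul']

@[simp]
lemma polynomialTensorAction_tmul (p : A[X]) (n : N) :
    polynomialTensorAction A N (p ⊗ₜ n) = p • n := by
  simp [polynomialTensorAction]

lemma polynomialTensorAction_surjective : Function.Surjective (polynomialTensorAction A N) :=
  fun n ↦ ⟨1 ⊗ₜ n, by simp⟩

lemma polynomialTensorCoeff_succ_diff (z : A[X] ⊗[A] N) (k : ℕ) :
    polynomialTensorCoeff A N (polynomialTensorDiff A N z) (k + 1) =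
      polynomialTensorCoeff A N z k - (X : A[X]) • polynomialTensorCoeff A N z (k + 1) := by
  induction z with
  | zero => simp
  | add x y hx hy => simp only [map_add, Finsupp.add_apply, hx, hy, smul_add]; abel
  | tmul p n =>
    simp only [polynomialTensorDiff_tmul, map_sub, Finsupp.sub_apply, polynomialTensorCoeff_tmul,
      Polynomial.coeff_X_mul, smul_comm (X : A[X])]

lemma polynomialTensorDiff_injective : Function.Injective (polynomialTensorDiff A N) := by
  rw [injective_iff_map_eq_zero]
  intro z hz
  set c := polynomialTensorCoeff A N z
  have coeff_eq_X_smul (k : ℕ) : c k = (X : A[X]) • c (k + 1) := by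
    simpa [hz, sub_eq_zero, eq_comm (a := (0 : N))] using polynomialTensorCoeff_succ_diff z k
  have coeff_eq_X_pow_smul (j k : ℕ) : c k = (X ^ j : A[X]) • c (k + j) := by
    induction j with
    | zero => simp
    | succ j ih => rw [ih, coeff_eq_X_smul, smul_smul, ← pow_succ, add_assoc]
  obtain ⟨b, hb⟩ := c.support.exists_nat_subset_range
  have hc0 : c = 0 := by
    ext k
    have : k + b ∉ c.support := fun h ↦ by simpa using hb h
    rw [coeff_eq_X_pow_smul b k, Finsupp.notMem_support_iff.1 this, smul_zero, Finsupp.zero_apply]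
  exact (polynomialTensorCoeff A N).map_eq_zero_iff.1 hc0

lemma X_pow_tmul_sub_mem_range_polynomialTensorDiff (k : ℕ) (n : N) :
    (X ^ k : A[X]) ⊗ₜ[A] n - 1 ⊗ₜ ((X ^ k : A[X]) • n) ∈
      LinearMap.range (polynomialTensorDiff A N) := by
  induction k generalizing n with
  | zero => simp
  | succ k ih =>
    convert add_mem (LinearMap.mem_range_self (polynomialTensorDiff A N) ((X ^ k : A[X]) ⊗ₜ n))
      (ih ((X : A[X]) • n)) using 1
    rw [polynomialTensorDiff_tmul, smul_smul, ← pow_succ, ← pow_succ']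
    abel

lemma sub_one_tmul_action_mem_range_polynomialTensorDiff (z : A[X] ⊗[A] N) :
    z - 1 ⊗ₜ polynomialTensorAction A N z ∈ LinearMap.range (polynomialTensorDiff A N) := by
  induction z with
  | zero => simp
  | add x y hx hy =>
    rw [map_add, tmul_add, add_sub_add_comm]
    exact add_mem hx hy
  | tmul p n =>
    induction p using Polynomial.induction_on' with
    | add p q hp hq =>
      rw [add_tmul, map_add, tmul_add, add_sub_add_comm]
      exact add_mem hp hq
    | monomial k a =>
      convert X_pow_tmul_sub_mem_range_polynomialTensorDiff k (a • n) using 2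
      · rw [← smul_X_eq_monomial, TensorProduct.smul_tmul]
      · rw [polynomialTensorAction_tmul, ← smul_X_eq_monomial, smul_assoc,
          smul_comm (X ^ k : A[X])]

lemma exact_polynomialTensorDiff_polynomialTensorAction :
    Function.Exact (polynomialTensorDiff A N) (polynomialTensorAction A N) := by
  refine fun z ↦ ⟨fun hz ↦ ?_, ?_⟩
  · simpa [hz] using sub_one_tmul_action_mem_range_polynomialTensorDiff z
  · rintro ⟨w, rfl⟩
    induction w with
    | zero => simp
    | add x y hx hy => simp [hx, hy]
    | tmul p n => simp [smul_smul, mul_comm]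

lemma FlatDimLE.polynomial {n : ℕ} (h : FlatDimLE A n N) : FlatDimLE A[X] (n + 1) N :=
  of_exact polynomialTensorDiff_injective polynomialTensorAction_surjective
    exact_polynomialTensorDiff_polynomialTensorAction h.baseChange h.baseChange

end PolynomialRing

open Polynomial in
lemma FlatDimLE.mvPolynomial {A N : Type u} [CommRing A] [AddCommGroup N] [Module A N] {n d : ℕ}
    [module : Module (MvPolynomial (Fin d) A) N]
    [tower : IsScalarTower A (MvPolynomial (Fin d) A) N] (h : FlatDimLE A n N) :
    FlatDimLE (MvPolynomial (Fin d) A) (n + d) N := by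
  revert module tower
  induction d with
  | zero =>
    intro _ _
    refine h.of_ringEquiv (MvPolynomial.isEmptyRingEquiv A (Fin 0)).symm fun a x ↦ ?_
    rw [MvPolynomial.isEmptyRingEquiv_symm_apply]
    exact algebraMap_smul (MvPolynomial (Fin 0) A) a x
  | succ d ih =>
    intro _ _
    let e := (MvPolynomial.finSuccEquiv A d).toRingEquiv
    let _ : Module (MvPolynomial (Fin d) A)[X] N := Module.compHom N e.symm.toRingHom
    let _ : Module (MvPolynomial (Fin d) A) N :=
      Module.compHom N (Polynomial.C : MvPolynomial (Fin d) A →+* _)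
    have : IsScalarTower (MvPolynomial (Fin d) A) (MvPolynomial (Fin d) A)[X] N :=
      .of_algebraMap_smul fun _ _ ↦ rfl
    have : IsScalarTower A (MvPolynomial (Fin d) A) N := .of_algebraMap_smul fun a x ↦ by
      rw [← algebraMap_smul (MvPolynomial (Fin (d + 1)) A) a x]
      exact congr($((MvPolynomial.finSuccEquiv A d).symm.commutes a) • x)
    exact of_ringEquiv e.symm (fun _ _ ↦ rfl) ih.polynomial

/-! ### Exchanging members of regular sequences -/

section RegularSequence

open RingTheory.Sequence

section CommRing

variable {A : Type*} [CommRing A] {l l' : List A} {r g u : A}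

lemma ofList_eq_of_perm (h : l.Perm l') : Ideal.ofList l = Ideal.ofList l' :=
  congrArg Ideal.span (Set.ext fun _ ↦ h.mem_iff)

lemma isSMulRegular_quotient_smul_top_iff {I : Ideal A} :
    IsSMulRegular (A ⧸ (I • ⊤ : Submodule A A)) r ↔ ∀ a, r * a ∈ I → a ∈ I := by
  rw [isSMulRegular_quotient_iff_mem_of_smul_mem]
  simp

lemma isWeaklyRegular_append_singleton_iff :
    IsWeaklyRegular A (l ++ [r]) ↔
      IsWeaklyRegular A l ∧ ∀ a, r * a ∈ Ideal.ofList l → a ∈ Ideal.ofList l := by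
  rw [isWeaklyRegular_append_iff, isWeaklyRegular_singleton_iff,
    isSMulRegular_quotient_smul_top_iff]

lemma isRegular_iff_ofList_ne_top :
    IsRegular A l ↔ IsWeaklyRegular A l ∧ Ideal.ofList l ≠ ⊤ := by
  rw [isRegular_iff, ne_comm]
  simp

lemma notMem_ofList_of_isRegular_append_cons (h : IsRegular A (l ++ r :: l')) :
    r ∉ Ideal.ofList l := by
  intro hr
  obtain ⟨hreg, htop⟩ := isRegular_iff_ofList_ne_top.1 h
  rw [List.append_cons, isWeaklyRegular_append_iff, isWeaklyRegular_append_singleton_iff] at hreg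
  refine htop ((Ideal.eq_top_iff_one _).2 ?_)
  rw [Ideal.ofList_append]
  exact Ideal.mem_sup_left (hreg.1.2 1 (by rwa [mul_one]))

lemma ofList_append_singleton_eq_of_sub_mem (hu : IsUnit u) (hg : g - u * r ∈ Ideal.ofList l) :
    Ideal.ofList (l ++ [g]) = Ideal.ofList (l ++ [r]) := by
  simp only [Ideal.ofList_append, Ideal.ofList_singleton]
  refine le_antisymm (sup_le le_sup_left ?_) (sup_le le_sup_left ?_) <;>
    rw [Ideal.span_singleton_le_iff_mem]
  · rw [← sub_add_cancel g (u * r)]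
    exact add_mem (Ideal.mem_sup_left hg)
      (Ideal.mem_sup_right (Ideal.mul_mem_left _ _ (Ideal.mem_span_singleton_self r)))
  · rw [← Ideal.unit_mul_mem_iff_mem _ hu, ← sub_sub_cancel g (u * r)]
    exact sub_mem (Ideal.mem_sup_right (Ideal.mem_span_singleton_self g)) (Ideal.mem_sup_left hg)

lemma isWeaklyRegular_append_singleton_of_sub_mem (hu : IsUnit u)
    (hg : g - u * r ∈ Ideal.ofList l) (h : IsWeaklyRegular A (l ++ [r])) :
    IsWeaklyRegular A (l ++ [g]) := by
  rw [isWeaklyRegular_append_singleton_iff] at h ⊢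
  refine ⟨h.1, fun a ha ↦ h.2 a ((Ideal.unit_mul_mem_iff_mem _ hu).1 ?_)⟩
  have : u * (r * a) = g * a - a * (g - u * r) := by ring
  rw [this]
  exact sub_mem ha (Ideal.mul_mem_left _ _ hg)

lemma isRegular_append_singleton_of_sub_mem (hu : IsUnit u)
    (hg : g - u * r ∈ Ideal.ofList l) (h : IsRegular A (l ++ [r])) : IsRegular A (l ++ [g]) := by
  rw [isRegular_iff_ofList_ne_top] at h ⊢
  rw [ofList_append_singleton_eq_of_sub_mem hu hg]
  exact ⟨isWeaklyRegular_append_singleton_of_sub_mem hu hg h.1, h.2⟩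

end CommRing

section IsLocalRing

variable {V : Type*} [CommRing V] [IsLocalRing V]

lemma mem_maximalIdeal_mul_ofList_or_exists_isUnit {rs : List V} {g : V}
    (hg : g ∈ Ideal.ofList rs) :
    g ∈ maximalIdeal V * Ideal.ofList rs ∨
      ∃ a r b u, rs = a ++ r :: b ∧ IsUnit u ∧ g - u * r ∈ Ideal.ofList (a ++ b) := by
  induction rs generalizing g with
  | nil => exact .inl (by simpa using hg)
  | cons r rs ih =>
    rw [Ideal.ofList_cons, Ideal.mem_span_singleton_sup] at hg
    obtain ⟨c, y, hy, rfl⟩ := hg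
    by_cases hc : IsUnit c
    · exact .inr ⟨[], r, rs, c, rfl, hc, by simpa using hy⟩
    rcases ih hy with hmem | ⟨a, r', b, u, rfl, hu, hmem⟩
    · left
      rw [Ideal.ofList_cons, Ideal.mul_sup]
      exact add_mem (Ideal.mem_sup_left
        (Ideal.mul_mem_mul hc (Ideal.mem_span_singleton_self r))) (Ideal.mem_sup_right hmem)
    · refine .inr ⟨r :: a, r', b, u, rfl, hu, ?_⟩
      rw [List.cons_append, Ideal.ofList_cons, Ideal.mem_span_singleton_sup]
      exact ⟨c, _, hmem, (add_sub_assoc _ _ _).symm⟩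

variable [IsNoetherianRing V]

lemma exists_isRegular_append_cons_of_mem {pre rs : List V} {g : V}
    (h : IsRegular V (pre ++ rs)) (hg : g ∈ Ideal.ofList (pre ++ rs))
    (hg' : g ∉ Ideal.ofList pre ⊔ maximalIdeal V * Ideal.ofList (pre ++ rs)) :
    ∃ rs', IsRegular V (pre ++ g :: rs') ∧
      Ideal.ofList (pre ++ g :: rs') = Ideal.ofList (pre ++ rs) ∧ rs'.length < rs.length := by
  rw [Ideal.ofList_append, Submodule.mem_sup] at hg
  obtain ⟨p, hp, y, hy, rfl⟩ := hg
  rcases mem_maximalIdeal_mul_ofList_or_exists_isUnit hy with hmem | ⟨a, r, b, u, rfl, hu, hmem⟩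
  · refine absurd (add_mem (Ideal.mem_sup_left hp)
      (Ideal.mem_sup_right (Ideal.mul_mono_right ?_ hmem))) hg'
    rw [Ideal.ofList_append]
    exact le_sup_right
  have hperm (x : V) : (pre ++ x :: (a ++ b)).Perm ((pre ++ (a ++ b)) ++ [x]) := by
    rw [List.append_assoc]
    exact List.perm_append_comm (l₁ := [x]).append_left pre
  have hperm_r : (pre ++ (a ++ r :: b)).Perm ((pre ++ (a ++ b)) ++ [r]) :=
    (List.perm_middle.append_left pre).trans (hperm r)
  have hsub : (p + y) - u * r ∈ Ideal.ofList (pre ++ (a ++ b)) := by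
    rw [Ideal.ofList_append pre, add_sub_assoc]
    exact add_mem (Ideal.mem_sup_left hp) (Ideal.mem_sup_right hmem)
  refine ⟨a ++ b, isRegular_of_perm ?_ (hperm _).symm, ?_, by simp⟩
  · exact isRegular_append_singleton_of_sub_mem hu hsub (isRegular_of_perm h hperm_r)
  · rw [ofList_eq_of_perm (hperm _), ofList_eq_of_perm hperm_r,
      ofList_append_singleton_eq_of_sub_mem hu hsub]

lemma notMem_ofList_sup_maximalIdeal_mul {a b : List V} {x : V} (h : IsRegular V (a ++ x :: b)) :
    x ∉ Ideal.ofList a ⊔ maximalIdeal V * Ideal.ofList (a ++ x :: b) := by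
  intro hx
  have hperm : (a ++ x :: b).Perm ((a ++ b) ++ [x]) :=
    List.perm_middle.trans (List.perm_append_comm (l₁ := [x]))
  refine notMem_ofList_of_isRegular_append_cons (isRegular_of_perm h hperm) ?_
  have hle : Ideal.ofList (a ++ x :: b) ≤ Ideal.ofList (a ++ b) := by
    refine Submodule.le_of_le_smul_of_le_jacobson_bot (I := maximalIdeal V)
      (IsNoetherian.noetherian _) (maximalIdeal_le_jacobson _) ?_
    conv_lhs => rw [ofList_eq_of_perm hperm, Ideal.ofList_append, Ideal.ofList_singleton]
    refine sup_le le_sup_left ((Ideal.span_singleton_le_iff_mem _).2 ?_)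
    have ha : Ideal.ofList a ≤ Ideal.ofList (a ++ b) := by
      rw [Ideal.ofList_append]
      exact le_sup_left
    exact (sup_le_sup_right ha _ : _ ≤ Ideal.ofList (a ++ b) ⊔ maximalIdeal V * _) hx
  exact hle (Ideal.subset_span (by simp))

lemma exists_mem_notMem_sup_maximalIdeal_mul {G : Set V} {pre rs : List V} {r : V}
    (h : IsRegular V (pre ++ r :: rs))
    (hG : Ideal.ofList (pre ++ r :: rs) = Ideal.ofList pre ⊔ Ideal.span G) :
    ∃ g ∈ G, g ∉ Ideal.ofList pre ⊔ maximalIdeal V * Ideal.ofList (pre ++ r :: rs) := by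
  by_contra! hcon
  have hle : Ideal.ofList (pre ++ r :: rs) ≤ Ideal.ofList pre := by
    refine Submodule.le_of_le_smul_of_le_jacobson_bot (I := maximalIdeal V)
      (IsNoetherian.noetherian _) (maximalIdeal_le_jacobson _) ?_
    conv_lhs => rw [hG]
    exact sup_le le_sup_left (Ideal.span_le.2 hcon)
  exact notMem_ofList_of_isRegular_append_cons h (hle (Ideal.subset_span (by simp)))

lemma exists_isRegular_append_subset {G : Set V} {pre rs : List V} (h : IsRegular V (pre ++ rs))
    (hG : Ideal.ofList (pre ++ rs) = Ideal.ofList pre ⊔ Ideal.span G) :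
    ∃ gs : List V, (∀ g ∈ gs, g ∈ G) ∧ IsRegular V (pre ++ gs) ∧
      Ideal.ofList (pre ++ gs) = Ideal.ofList (pre ++ rs) := by
  induction hn : rs.length using Nat.strong_induction_on generalizing pre rs with
  | _ n ih =>
    subst hn
    rcases rs with _ | ⟨r, rs⟩
    · exact ⟨[], by simp, h, rfl⟩
    obtain ⟨g, hgG, hg⟩ := exists_mem_notMem_sup_maximalIdeal_mul h hG
    have hg_mem : g ∈ Ideal.ofList (pre ++ r :: rs) :=
      hG ▸ Ideal.mem_sup_right (Ideal.subset_span hgG)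
    obtain ⟨rs', hreg, hspan, hlt⟩ := exists_isRegular_append_cons_of_mem h hg_mem hg
    rw [List.append_cons] at hreg hspan
    have hG' : Ideal.ofList (pre ++ [g] ++ rs') = Ideal.ofList (pre ++ [g]) ⊔ Ideal.span G := by
      rw [hspan, hG, Ideal.ofList_append, sup_assoc, Ideal.ofList_singleton,
        sup_eq_right.2 ((Ideal.span_singleton_le_iff_mem _).2 (Ideal.subset_span hgG))]
    obtain ⟨gs, hgs, hreg', hspan'⟩ := ih _ hlt hreg hG' rfl
    rw [← List.append_cons] at hreg' hspan'
    exact ⟨g :: gs, by simpa using ⟨hgG, hgs⟩, hreg', hspan'.trans hspan⟩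

lemma exists_isRegular_append_of_notMem {l pre rs : List V} (h : IsRegular V (pre ++ rs))
    (hl : ∀ a x b, l = a ++ x :: b → x ∈ Ideal.ofList (pre ++ rs) ∧
      x ∉ Ideal.ofList (pre ++ a) ⊔ maximalIdeal V * Ideal.ofList (pre ++ rs)) :
    ∃ rs', IsRegular V (pre ++ l ++ rs') ∧
      Ideal.ofList (pre ++ l ++ rs') = Ideal.ofList (pre ++ rs) := by
  induction l generalizing pre rs with
  | nil => exact ⟨rs, by simpa using h, by simp⟩
  | cons g l ih =>
    obtain ⟨hg, hg'⟩ := hl [] g l rfl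
    obtain ⟨rs', hreg, hspan, -⟩ := exists_isRegular_append_cons_of_mem h hg (by simpa using hg')
    rw [List.append_cons] at hreg hspan
    obtain ⟨rs'', hreg', hspan'⟩ := ih hreg fun a x b hab ↦ by
      rw [hspan, ← List.append_cons]
      exact hl (g :: a) x b (by simp [hab])
    exact ⟨rs'', by simpa using hreg', by rw [← hspan, ← hspan']; simp⟩

end IsLocalRing

end RegularSequence

/-! ### The local criterion of flatness for regular sequences -/

section LocalCriterion

open RingTheory.Sequence Pointwise

section SmulTop

variable {A N : Type*} [CommRing A] [AddCommGroup N] [Module A N]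

lemma mem_span_range_smul_top_iff {ι : Type*} [Fintype ι] {c : ι → A} {x : N} :
    x ∈ Ideal.span (Set.range c) • (⊤ : Submodule A N) ↔ ∃ y : ι → N, ∑ i, c i • y i = x := by
  classical
  refine ⟨fun hx ↦ ?_, ?_⟩
  · let φ : (ι → N) →ₗ[A] N := ∑ i, c i • LinearMap.proj i
    have hφ (y : ι → N) : φ y = ∑ i, c i • y i := by simp [φ]
    have hle : Ideal.span (Set.range c) • (⊤ : Submodule A N) ≤ LinearMap.range φ := by
      rw [Submodule.span_smul_eq, Submodule.set_smul_le_iff]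
      rintro _ n ⟨i, rfl⟩ -
      refine ⟨Pi.single i n, ?_⟩
      rw [hφ, Finset.sum_eq_single_of_mem i (Finset.mem_univ i)
        fun j _ hj ↦ by rw [Pi.single_eq_of_ne hj, smul_zero], Pi.single_eq_same]
    obtain ⟨y, rfl⟩ := hle hx
    exact ⟨y, (hφ y).symm⟩
  · rintro ⟨y, rfl⟩
    exact sum_mem fun i _ ↦ Submodule.smul_mem_smul (Ideal.subset_span ⟨i, rfl⟩) trivial

lemma smul_mem_smul_top_iff_mem_colon_smul_top [Module.Flat A N] {I : Ideal A} (hI : I.FG) {a : A}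
    {x : N} : a • x ∈ I • (⊤ : Submodule A N) ↔
      x ∈ Submodule.colon I {a} • (⊤ : Submodule A N) := by
  refine ⟨fun hx ↦ ?_, fun hx ↦ ?_⟩
  · obtain ⟨n, c, rfl⟩ := Submodule.fg_iff_exists_fin_generating_family.1 hI
    obtain ⟨y, hy⟩ := mem_span_range_smul_top_iff.1 hx
    have hrel : ∑ i : Option (Fin n), (i.elim a fun i ↦ -c i : A) • (i.elim x y : N) = 0 := by
      simp [Fintype.sum_option, hy]
    obtain ⟨k, d, z, hz, hd⟩ := Module.Flat.isTrivialRelation_of_sum_smul_eq_zero hrel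
    rw [show x = ∑ j, d none j • z j from hz none]
    refine sum_mem fun j _ ↦ Submodule.smul_mem_smul ?_ trivial
    have hdj := hd j
    simp only [Fintype.sum_option, Option.elim, neg_mul, Finset.sum_neg_distrib,
      add_neg_eq_zero] at hdj
    rw [Submodule.mem_colon_singleton, smul_eq_mul, mul_comm, hdj]
    exact sum_mem fun i _ ↦ Ideal.mul_mem_right _ _ (Ideal.subset_span ⟨i, rfl⟩)
  · refine Submodule.smul_induction_on hx (fun c hc n _ ↦ ?_) fun x y hx hy ↦ ?_
    · rw [smul_smul, mul_comm]
      exact Submodule.smul_mem_smul (Submodule.mem_colon_singleton.1 hc) trivial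
    · rw [smul_add]
      exact add_mem hx hy

end SmulTop

variable {A B N : Type*} [CommRing A] [CommRing B] [Algebra A B] [AddCommGroup N] [Module A N]
  [Module B N] [IsScalarTower A B N]

lemma mem_map_smul_top_iff {I : Ideal A} {x : N} :
    x ∈ I.map (algebraMap A B) • (⊤ : Submodule B N) ↔ x ∈ I • (⊤ : Submodule A N) := by
  rw [← Submodule.restrictScalars_mem A, Ideal.smul_restrictScalars, Submodule.restrictScalars_top]

lemma smul_mem_smul_top (I : Ideal A) (b : B) {x : N} (hx : x ∈ I • (⊤ : Submodule A N)) :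
    b • x ∈ I • (⊤ : Submodule A N) :=
  mem_map_smul_top_iff.1 (Submodule.smul_mem _ b (mem_map_smul_top_iff (B := B).2 hx))

lemma exists_add_smul_of_smul_mem_smul_top [Module.Flat A N] {I : Ideal A} (hI : I.FG) {a : A}
    {b : B} (hreg : ∀ x : N, b • x ∈ (I ⊔ Ideal.span {a}) • (⊤ : Submodule A N) →
      x ∈ (I ⊔ Ideal.span {a}) • (⊤ : Submodule A N))
    {x : N} (hx : b • x ∈ I • (⊤ : Submodule A N)) :
    ∃ z ∈ I • (⊤ : Submodule A N), ∃ y : N, x = z + a • y ∧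
      b • y ∈ Submodule.colon I {a} • (⊤ : Submodule A N) := by
  have hx' := hreg x (Submodule.smul_mono_left le_sup_left hx)
  rw [Submodule.sup_smul, Submodule.ideal_span_singleton_smul, Submodule.mem_sup] at hx'
  obtain ⟨z, hz, w, hw, rfl⟩ := hx'
  obtain ⟨y, -, rfl⟩ := (Submodule.mem_smul_pointwise_iff_exists _ _ _).1 hw
  refine ⟨z, hz, y, rfl, (smul_mem_smul_top_iff_mem_colon_smul_top hI).1 ?_⟩
  have : a • b • y = b • (z + a • y) - b • z := by
    rw [smul_add, add_sub_cancel_left, smul_comm]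
  rw [this]
  exact sub_mem hx (smul_mem_smul_top I b hz)

variable [IsLocalRing A] [IsLocalRing B] [IsLocalHom (algebraMap A B)] [IsNoetherian B N]

lemma mem_smul_top_of_smul_mem_of_nakayama {I : Ideal A} {a : A} (ha : a ∈ maximalIdeal A) {b : B}
    (h : ∀ x : N, b • x ∈ I • (⊤ : Submodule A N) → ∃ z ∈ I • (⊤ : Submodule A N), ∃ y : N,
      x = z + a • y ∧ b • y ∈ I • (⊤ : Submodule A N))
    {x : N} (hx : b • x ∈ I • (⊤ : Submodule A N)) : x ∈ I • (⊤ : Submodule A N) := by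
  let J : Submodule B N := I.map (algebraMap A B) • ⊤
  have hJ : J.comap (LinearMap.lsmul B N b) ≤ J := by
    refine Submodule.le_of_le_smul_of_le_jacobson_bot (I := maximalIdeal B)
      (IsNoetherian.noetherian _) (maximalIdeal_le_jacobson _) fun x hx ↦ ?_
    obtain ⟨z, hz, y, rfl, hy⟩ := h x (mem_map_smul_top_iff.1 hx)
    refine add_mem (Submodule.mem_sup_left (mem_map_smul_top_iff.2 hz))
      (Submodule.mem_sup_right ?_)
    rw [← algebraMap_smul B a]
    exact Submodule.smul_mem_smul ((map_mem_nonunits_iff (algebraMap A B) a).2 ha)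
      (mem_map_smul_top_iff (B := B).2 hy)
  exact mem_map_smul_top_iff.1 (hJ (mem_map_smul_top_iff (B := B).2 hx))

variable [IsNoetherianRing A] [Module.Flat A N]

/- Noetherian induction on `I`: for `a ∈ m_A \ I`, the claim for `I` follows from the claims for
`I + (a)` and for the colon ideal `(I : a)`, by flatness; when `(I : a) = I`, Nakayama's lemma
replaces the latter. -/
lemma mem_smul_top_of_smul_mem {b : B}
    (hreg : ∀ x : N, b • x ∈ maximalIdeal A • (⊤ : Submodule A N) →
      x ∈ maximalIdeal A • (⊤ : Submodule A N)) (I : Ideal A) :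
    ∀ x : N, b • x ∈ I • (⊤ : Submodule A N) → x ∈ I • (⊤ : Submodule A N) := by
  induction I using IsNoetherian.induction with
  | hgt I ih =>
    intro x hx
    by_cases htop : I = ⊤
    · simp [htop]
    by_cases hmax : maximalIdeal A ≤ I
    · rw [← (maximalIdeal.isMaximal A).eq_of_le htop hmax] at hx ⊢
      exact hreg x hx
    obtain ⟨a, ha, haI⟩ := SetLike.not_le_iff_exists.1 hmax
    have hlt : I < I ⊔ Ideal.span {a} :=
      left_lt_sup.2 fun hle ↦ haI ((Ideal.span_singleton_le_iff_mem I).1 hle)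
    have hcol : I ≤ Submodule.colon I {a} := fun c hc ↦
      Submodule.mem_colon_singleton.2 (Ideal.mul_mem_right _ _ hc)
    have key (x : N) (hx : b • x ∈ I • (⊤ : Submodule A N)) :=
      exists_add_smul_of_smul_mem_smul_top (IsNoetherian.noetherian I) (ih _ hlt) hx
    by_cases hc : I = Submodule.colon I {a}
    · rw [← hc] at key
      exact mem_smul_top_of_smul_mem_of_nakayama ha key hx
    · obtain ⟨z, hz, y, rfl, hy⟩ := key x hx
      exact add_mem hz ((smul_mem_smul_top_iff_mem_colon_smul_top (IsNoetherian.noetherian I)).2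
        (ih _ (lt_of_le_of_ne hcol hc) y hy))

lemma isSMulRegular_of_maximalIdeal_smul_top {b : B}
    (hreg : ∀ x : N, b • x ∈ maximalIdeal A • (⊤ : Submodule A N) →
      x ∈ maximalIdeal A • (⊤ : Submodule A N)) : IsSMulRegular N b := by
  rw [isSMulRegular_iff_right_eq_zero_of_smul]
  intro x hx
  simpa using mem_smul_top_of_smul_mem hreg ⊥ x (by rw [hx]; exact zero_mem _)

lemma flat_quotSMulTop_of_maximalIdeal_smul_top {b : B}
    (hreg : ∀ x : N, b • x ∈ maximalIdeal A • (⊤ : Submodule A N) →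
      x ∈ maximalIdeal A • (⊤ : Submodule A N)) : Module.Flat A (QuotSMulTop b N) := by
  refine Module.Flat.of_forall_isTrivialRelation fun {n f x} hx ↦ ?_
  let π : N →ₗ[A] QuotSMulTop b N := (Submodule.mkQ (b • (⊤ : Submodule B N))).restrictScalars A
  have hπ (y : N) : π (b • y) = 0 :=
    (Submodule.Quotient.mk_eq_zero _).2 (Submodule.smul_mem_pointwise_smul y b ⊤ trivial)
  choose y hy using fun i ↦ Submodule.mkQ_surjective (b • (⊤ : Submodule B N)) (x i)
  obtain rfl : (fun i ↦ π (y i)) = x := funext hy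
  have hker : ∑ i, f i • y i ∈ b • (⊤ : Submodule B N) := by
    rw [← Submodule.Quotient.mk_eq_zero]
    change π _ = 0
    rw [map_sum, ← hx]
    exact Finset.sum_congr rfl fun i _ ↦ map_smul π _ _
  obtain ⟨w, -, hw⟩ := (Submodule.mem_smul_pointwise_iff_exists _ _ _).1 hker
  obtain ⟨v, rfl⟩ := mem_span_range_smul_top_iff.1 (mem_smul_top_of_smul_mem hreg
    (Ideal.span (Set.range f)) w (by rw [hw]; exact mem_span_range_smul_top_iff.2 ⟨y, rfl⟩))
  have hrel : ∑ i, f i • (y i - b • v i) = 0 := by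
    simp only [smul_sub, Finset.sum_sub_distrib, ← hw, Finset.smul_sum, smul_comm b, sub_self]
  obtain ⟨k, d, z, hz, hd⟩ := Module.Flat.isTrivialRelation_of_sum_smul_eq_zero hrel
  refine ⟨k, d, fun j ↦ π (z j), fun i ↦ ?_, hd⟩
  have hyi := congrArg π (hz i)
  simpa only [map_sub, hπ, sub_zero, map_sum, map_smul] using hyi

end LocalCriterion

section LocalCriterionList

open RingTheory.Sequence Pointwise

/-- The isomorphism `(N / IN) / b(N / IN) ≃ (N / bN) / I(N / bN)`, used to run an induction along
a regular sequence on `N / IN`. -/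
def quotSMulTopQuotientEquiv {B N : Type*} [CommRing B] [AddCommGroup N] [Module B N]
    (I : Ideal B) (b : B) :
    QuotSMulTop b (N ⧸ (I • ⊤ : Submodule B N)) ≃ₗ[B]
      QuotSMulTop b N ⧸ (I • ⊤ : Submodule B (QuotSMulTop b N)) :=
  Submodule.quotEquivOfEq _ _
      (by rw [Submodule.map_pointwise_smul, Submodule.map_top, Submodule.range_mkQ]) ≪≫ₗ
    Submodule.quotientQuotientEquivQuotientSup (I • ⊤ : Submodule B N) (b • ⊤ : Submodule B N) ≪≫ₗ
    Submodule.quotEquivOfEq _ _ (sup_comm _ _) ≪≫ₗ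
    (Submodule.quotientQuotientEquivQuotientSup (b • ⊤ : Submodule B N)
      (I • ⊤ : Submodule B N)).symm ≪≫ₗ
    Submodule.quotEquivOfEq _ _
      (by rw [Submodule.map_smul'', Submodule.map_top, Submodule.range_mkQ])

theorem isWeaklyRegular_and_flat_of_isWeaklyRegular_quotient {A B : Type*} [CommRing A] [CommRing B]
    [Algebra A B] [IsLocalRing A] [IsLocalRing B] [IsLocalHom (algebraMap A B)]
    [IsNoetherianRing A] {N : Type*} [AddCommGroup N] [Module A N] [Module B N]
    [IsScalarTower A B N] [IsNoetherian B N] [Module.Flat A N] {ls : List B}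
    (h : IsWeaklyRegular
      (N ⧸ ((maximalIdeal A).map (algebraMap A B) • ⊤ : Submodule B N)) ls) :
    IsWeaklyRegular N ls ∧ Module.Flat A (N ⧸ (Ideal.ofList ls • ⊤ : Submodule B N)) := by
  induction ls generalizing N with
  | nil =>
    have hbot : (Ideal.ofList ([] : List B) • ⊤ : Submodule B N) = ⊥ := by simp
    exact ⟨IsWeaklyRegular.nil _ _,
      Module.Flat.of_linearEquiv ((Submodule.quotEquivOfEqBot _ hbot).restrictScalars A)⟩
  | cons b ls ih =>
    rw [isWeaklyRegular_cons_iff] at h ⊢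
    have hb (x : N) (hx : b • x ∈ maximalIdeal A • (⊤ : Submodule A N)) :
        x ∈ maximalIdeal A • (⊤ : Submodule A N) := by
      rw [← mem_map_smul_top_iff (B := B)] at hx ⊢
      exact isSMulRegular_quotient_iff_mem_of_smul_mem _ _ |>.1 h.1 x hx
    have hflat := flat_quotSMulTop_of_maximalIdeal_smul_top hb
    obtain ⟨hreg, hflat'⟩ := ih (N := QuotSMulTop b N)
      (((quotSMulTopQuotientEquiv _ b).isWeaklyRegular_congr ls).1 h.2)
    exact ⟨⟨isSMulRegular_of_maximalIdeal_smul_top hb, hreg⟩, Module.Flat.of_linearEquiv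
      ((Submodule.quotOfListConsSMulTopEquivQuotSMulTopInner N b ls).restrictScalars A)⟩

end LocalCriterionList

/-! ### Descent of the complete intersection property -/

section Descent

open RingTheory.Sequence

lemma isWeaklyRegular_of_faithfullyFlat {A B : Type*} [CommRing A] [CommRing B] [Algebra A B]
    [Module.FaithfullyFlat A B] {l : List A} (h : IsWeaklyRegular B (l.map (algebraMap A B))) :
    IsWeaklyRegular A l := by
  induction l using List.reverseRecOn with
  | nil => exact IsWeaklyRegular.nil _ _
  | append_singleton l r ih =>
    rw [List.map_append, List.map_singleton, isWeaklyRegular_append_singleton_iff,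
      ← Ideal.map_ofList] at h
    rw [isWeaklyRegular_append_singleton_iff]
    refine ⟨ih h.1, fun a ha ↦ ?_⟩
    rw [← Ideal.comap_map_eq_self_of_faithfullyFlat (B := B) (Ideal.ofList l)]
    exact h.2 _ (by rw [← map_mul]; exact Ideal.mem_map_of_mem _ ha)

lemma exists_list_map_eq_of_forall_exists {α β : Type*} {f : α → β} {p : α → Prop} {l : List β}
    (h : ∀ y ∈ l, ∃ x, p x ∧ f x = y) : ∃ l' : List α, (∀ x ∈ l', p x) ∧ l'.map f = l := by
  have hl : l ∈ Set.range (List.map fun x : {x // p x} ↦ f x) := by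
    rw [Set.range_list_map]
    exact fun y hy ↦ let ⟨x, hx, hxy⟩ := h y hy; ⟨⟨x, hx⟩, hxy⟩
  obtain ⟨l', rfl⟩ := hl
  exact ⟨l'.map Subtype.val, by simp +contextual, by simp⟩

lemma ker_inf_map_le_of_flat {A B S T : Type*} [CommRing A] [CommRing B] [Algebra A B] [CommRing S]
    [CommRing T] [Algebra S T] [Module.Flat S T] {σ : A →+* S} (hσ : Function.Surjective σ)
    {π : B →+* T} (hπ : Function.Surjective π)
    (hcomm : ∀ a, π (algebraMap A B a) = algebraMap S T (σ a)) {I : Ideal A} (hI : I.FG) :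
    RingHom.ker π ⊓ I.map (algebraMap A B) ≤
      (RingHom.ker σ).map (algebraMap A B) ⊔ I.map (algebraMap A B) * RingHom.ker π := by
  rintro w ⟨hw, hwI⟩
  obtain ⟨n, a, rfl⟩ := Submodule.fg_iff_exists_fin_generating_family.1 hI
  rw [SetLike.mem_coe, ← mul_one w, ← Ideal.mul_top (Ideal.map _ _), ← smul_eq_mul (Ideal.map _ _),
    mul_one, mem_map_smul_top_iff] at hwI
  obtain ⟨c, rfl⟩ := mem_span_range_smul_top_iff.1 hwI
  have hrel : ∑ i, σ (a i) • π (c i) = 0 := by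
    rw [SetLike.mem_coe, RingHom.mem_ker, map_sum] at hw
    simpa only [Algebra.smul_def, map_mul, hcomm] using hw
  obtain ⟨k, s, t, hπc, hs⟩ :=
    Module.Flat.isTrivialRelation_of_sum_smul_eq_zero (R := S) (M := T) hrel
  choose d hd using fun i j ↦ hσ (s i j)
  choose e he using fun j ↦ hπ (t j)
  have hsplit : ∑ i, a i • c i = ∑ j, algebraMap A B (∑ i, a i * d i j) * e j +
      ∑ i, algebraMap A B (a i) * (c i - ∑ j, algebraMap A B (d i j) * e j) := by
    simp only [map_sum, map_mul, Finset.sum_mul, mul_sub, Finset.mul_sum, Finset.sum_sub_distrib,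
      Algebra.smul_def, mul_assoc]
    rw [Finset.sum_comm, add_sub_cancel]
  rw [hsplit]
  refine add_mem (Ideal.mem_sup_left ?_) (Ideal.mem_sup_right ?_)
  · refine sum_mem fun j _ ↦ Ideal.mul_mem_right _ _ (Ideal.mem_map_of_mem _ ?_)
    simpa only [RingHom.mem_ker, map_sum, map_mul, hd] using hs j
  · refine sum_mem fun i _ ↦ Ideal.mul_mem_mul
      (Ideal.mem_map_of_mem _ (Ideal.subset_span ⟨i, rfl⟩)) ?_
    rw [RingHom.mem_ker, map_sub, sub_eq_zero, map_sum]
    simpa only [map_mul, hcomm, hd, he, Algebra.smul_def] using hπc i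

section Local

variable {A B : Type u} [CommRing A] [CommRing B] [Algebra A B] [IsLocalRing A] [IsLocalRing B]
  [IsLocalHom (algebraMap A B)]

lemma exists_list_mem_map_mk_eq {J n : Ideal B} (hJ : maximalIdeal B ≤ n ⊔ J) {rs : List (B ⧸ n)}
    (hrs : Ideal.ofList rs = (maximalIdeal B).map (Ideal.Quotient.mk n)) :
    ∃ l : List B, (∀ x ∈ l, x ∈ J) ∧ l.map (Ideal.Quotient.mk n) = rs ∧
      maximalIdeal B ≤ Ideal.ofList l ⊔ n := by
  obtain ⟨l, hlJ, rfl⟩ : ∃ l : List B, (∀ x ∈ l, x ∈ J) ∧ l.map (Ideal.Quotient.mk n) = rs := by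
    refine exists_list_map_eq_of_forall_exists fun r hr ↦ ?_
    have hr : r ∈ J.map (Ideal.Quotient.mk n) := by
      rw [← bot_sup_eq (J.map _), ← Ideal.map_quotient_self n, ← Ideal.map_sup]
      exact Ideal.map_mono hJ (hrs ▸ Ideal.subset_span hr)
    exact (Ideal.mem_map_iff_of_surjective _ Ideal.Quotient.mk_surjective).1 hr
  refine ⟨l, hlJ, rfl, ?_⟩
  rw [← Ideal.map_ofList] at hrs
  rw [← Ideal.mk_ker (I := n), ← Ideal.comap_map_of_surjective' _ Ideal.Quotient.mk_surjective, hrs]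
  exact Ideal.le_comap_map

variable [IsNoetherianRing B]

lemma exists_isRegular_append_of_isRegular_map_mk {n J : Ideal B} {l js : List B}
    (hl : ∀ x ∈ l, x ∈ J) (hjs : IsRegular B js) (hjs_span : Ideal.ofList js = J)
    (hl_reg : IsRegular (B ⧸ n) (l.map (Ideal.Quotient.mk n)))
    (hl_span : Ideal.ofList (l.map (Ideal.Quotient.mk n)) =
      (maximalIdeal B).map (Ideal.Quotient.mk n)) :
    ∃ rs, IsRegular B (l ++ rs) ∧ Ideal.ofList (l ++ rs) = J := by
  have : Nontrivial (B ⧸ n) := not_subsingleton_iff_nontrivial.1 fun _ ↦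
    (isRegular_iff_ofList_ne_top.1 hl_reg).2 (Subsingleton.elim _ _)
  have : IsLocalRing (B ⧸ n) := .of_surjective' _ Ideal.Quotient.mk_surjective
  have hmap_max := map_maximalIdeal_of_surjective _ (Ideal.Quotient.mk_surjective (I := n))
  have hJ : J ≤ maximalIdeal B :=
    le_maximalIdeal (hjs_span ▸ (isRegular_iff_ofList_ne_top.1 hjs).2)
  obtain ⟨rs, hreg, hspan⟩ := exists_isRegular_append_of_notMem (pre := []) (l := l) hjs
    fun a x b hab ↦ by
      refine ⟨(hjs_span ▸ hl x (by simp [hab]) : x ∈ Ideal.ofList js), fun hx ↦ ?_⟩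
      subst hab
      rw [List.map_append, List.map_cons] at hl_reg hl_span
      refine notMem_ofList_sup_maximalIdeal_mul hl_reg ?_
      rw [hl_span, ← Ideal.map_ofList, ← hmap_max, ← Ideal.map_mul, ← Ideal.map_sup]
      refine Ideal.mem_map_of_mem _ ((sup_le_sup_left (Ideal.mul_mono_right ?_) _ :
        _ ≤ Ideal.ofList a ⊔ maximalIdeal B * maximalIdeal B) hx)
      rwa [List.nil_append, hjs_span]
  exact ⟨rs, hreg, hspan.trans hjs_span⟩

lemma isRegular_and_ofList_eq_of_append_map {I : Ideal A} {l : List B} {gs : List A}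
    [Module.Flat A B] [Module.Flat A (B ⧸ Ideal.ofList l)]
    (h : IsRegular B (l ++ gs.map (algebraMap A B))) (hgs : ∀ g ∈ gs, g ∈ I)
    (hI : I.map (algebraMap A B) ≤ Ideal.ofList (l ++ gs.map (algebraMap A B))) :
    IsRegular A gs ∧ Ideal.ofList gs = I := by
  have hle : Ideal.ofList gs ≤ I := Ideal.span_le.2 hgs
  have htop := (isRegular_iff_ofList_ne_top.1 h).2
  rw [Ideal.ofList_append, ← Ideal.map_ofList] at hI htop
  have hI_top : I ≠ ⊤ := by
    rintro rfl
    rw [Ideal.map_top] at hI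
    exact htop (top_le_iff.1 hI)
  have : Module.FaithfullyFlat A B := .of_flat_of_isLocalHom
  have hgs_reg : IsWeaklyRegular A gs := isWeaklyRegular_of_faithfullyFlat (B := B)
    ((isWeaklyRegular_append_iff _ _ _).1 (isRegular_of_perm h List.perm_append_comm).1).1
  refine ⟨isRegular_iff_ofList_ne_top.2 ⟨hgs_reg, fun h ↦ hI_top (top_le_iff.1 (h ▸ hle))⟩,
    le_antisymm hle ?_⟩
  have : Nontrivial (B ⧸ Ideal.ofList l) :=
    Ideal.Quotient.nontrivial_iff.2 fun h ↦ htop (by rw [h, top_sup_eq])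
  have : IsLocalRing (B ⧸ Ideal.ofList l) := .of_surjective' _ Ideal.Quotient.mk_surjective
  have : IsLocalHom (algebraMap B (B ⧸ Ideal.ofList l)) :=
    .of_surjective _ Ideal.Quotient.mk_surjective
  have : IsLocalHom (algebraMap A (B ⧸ Ideal.ofList l)) := by
    rw [IsScalarTower.algebraMap_eq A B (B ⧸ Ideal.ofList l)]
    exact RingHom.isLocalHom_comp _ _
  have : Module.FaithfullyFlat A (B ⧸ Ideal.ofList l) := .of_flat_of_isLocalHom
  rw [← Ideal.comap_map_eq_self_of_faithfullyFlat (B := B ⧸ Ideal.ofList l) (Ideal.ofList gs),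
    ← Ideal.map_le_iff_le_comap, IsScalarTower.algebraMap_eq A B (B ⧸ Ideal.ofList l),
    ← Ideal.map_map, ← Ideal.map_map]
  refine (Ideal.map_mono hI).trans ?_
  rw [Ideal.map_sup, Ideal.Quotient.algebraMap_eq, Ideal.map_quotient_self, bot_sup_eq]

variable [IsNoetherianRing A]

lemma ker_eq_ofList_sup_map {S T : Type*} [CommRing S] [CommRing T] [Algebra S T]
    [Module.Flat S T] {σ : A →+* S} (hσ : Function.Surjective σ)
    {π : B →+* T} (hπ : Function.Surjective π)
    (hcomm : ∀ a, π (algebraMap A B a) = algebraMap S T (σ a)) (hker : RingHom.ker π ≠ ⊤)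
    {l : List B} (hl : ∀ x ∈ l, x ∈ RingHom.ker π)
    (hmax : maximalIdeal B ≤ Ideal.ofList l ⊔ (maximalIdeal A).map (algebraMap A B)) :
    RingHom.ker π = Ideal.ofList l ⊔ (RingHom.ker σ).map (algebraMap A B) := by
  have hl' : Ideal.ofList l ≤ RingHom.ker π := Ideal.span_le.2 hl
  refine le_antisymm ?_ (sup_le hl' (Ideal.map_le_iff_le_comap.2 fun a ha ↦ ?_))
  · refine Submodule.le_of_le_smul_of_le_jacobson_bot (I := maximalIdeal B)
      (IsNoetherian.noetherian _) (maximalIdeal_le_jacobson _) fun y hy ↦ ?_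
    obtain ⟨z, hz, w, hw, rfl⟩ := Submodule.mem_sup.1 (hmax (le_maximalIdeal hker hy))
    have hwker : w ∈ RingHom.ker π := (Submodule.add_mem_iff_right _ (hl' hz)).1 hy
    refine add_mem (Submodule.mem_sup_left (Ideal.mem_sup_left hz)) ?_
    have hle : (maximalIdeal A).map (algebraMap A B) ≤ maximalIdeal B :=
      ((local_hom_TFAE (algebraMap A B)).out 0 2).1 ‹_›
    exact (sup_le_sup le_sup_right (Ideal.mul_mono_left hle) :
      _ ≤ (Ideal.ofList l ⊔ _) ⊔ maximalIdeal B * _)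
        (ker_inf_map_le_of_flat hσ hπ hcomm (IsNoetherian.noetherian _) ⟨hwker, hw⟩)
  · rw [Ideal.mem_comap, RingHom.mem_ker, hcomm, (RingHom.mem_ker).1 ha, map_zero]

lemma isWeaklyRegular_and_flat_of_isRegular_fibre [Module.Flat A B] {l : List B}
    (h : IsWeaklyRegular (B ⧸ (maximalIdeal A).map (algebraMap A B))
      (l.map (Ideal.Quotient.mk ((maximalIdeal A).map (algebraMap A B))))) :
    IsWeaklyRegular B l ∧ Module.Flat A (B ⧸ Ideal.ofList l) := by
  have hmul (I : Ideal B) : (I • ⊤ : Submodule B B) = I := by rw [smul_eq_mul, Ideal.mul_top]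
  rw [← Ideal.Quotient.algebraMap_eq, isWeaklyRegular_map_algebraMap_iff] at h
  obtain ⟨hreg, hflat⟩ := isWeaklyRegular_and_flat_of_isWeaklyRegular_quotient (A := A) (N := B)
    (((Submodule.quotEquivOfEq _ _ (hmul _).symm).isWeaklyRegular_congr l).1 h)
  exact ⟨hreg, .of_linearEquiv ((Submodule.quotEquivOfEq _ _ (hmul _).symm).restrictScalars A)⟩

/- The closed fibre being regular, a regular system of parameters of it lifts to a list `l` in
`ker π`. Then `B ⧸ (l)` is still flat over `A` by the local criterion, `l` is part of a minimal
generating set of `ker π = (l) + (ker σ) B`, and completing it by elements of `ker σ` gives the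
desired sequence. -/
theorem generatedByRegularSequence_ker_of_flat [Module.Flat A B] {S T : Type u} [CommRing S]
    [CommRing T] [Algebra S T] [Module.Flat S T] {σ : A →+* S} (hσ : Function.Surjective σ)
    {π : B →+* T} (hπ : Function.Surjective π)
    (hcomm : ∀ a, π (algebraMap A B a) = algebraMap S T (σ a))
    (hmax : maximalIdeal B ≤ (maximalIdeal A).map (algebraMap A B) ⊔ RingHom.ker π)
    (hker : GeneratedByRegularSequence B (RingHom.ker π))
    (hfibre : GeneratedByRegularSequence (B ⧸ (maximalIdeal A).map (algebraMap A B))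
      ((maximalIdeal B).map (Ideal.Quotient.mk _))) :
    GeneratedByRegularSequence A (RingHom.ker σ) := by
  obtain ⟨rs, hrs, hrs_span : Ideal.ofList rs = _⟩ := hfibre
  obtain ⟨js, hjs, hjs_span : Ideal.ofList js = _⟩ := hker
  have hker_ne_top : RingHom.ker π ≠ ⊤ := hjs_span ▸ (isRegular_iff_ofList_ne_top.1 hjs).2
  obtain ⟨l, hl, rfl, hl_max⟩ := exists_list_mem_map_mk_eq hmax hrs_span
  have hflat := (isWeaklyRegular_and_flat_of_isRegular_fibre hrs.1).2
  have hker_eq := ker_eq_ofList_sup_map hσ hπ hcomm hker_ne_top hl hl_max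
  obtain ⟨rs', hreg, hspan⟩ :=
    exists_isRegular_append_of_isRegular_map_mk hl hjs hjs_span hrs hrs_span
  obtain ⟨gs, hgs, hgs_reg, hgs_span⟩ := exists_isRegular_append_subset
    (G := algebraMap A B '' RingHom.ker σ) hreg (by rw [hspan, hker_eq]; rfl)
  obtain ⟨gs, hgs_ker, rfl⟩ :=
    exists_list_map_eq_of_forall_exists (p := (· ∈ RingHom.ker σ)) hgs
  obtain ⟨hreg, hspan⟩ := isRegular_and_ofList_eq_of_append_map hgs_reg hgs_ker
    (by rw [hgs_span, hspan, hker_eq]; exact le_sup_right)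
  exact ⟨gs, hreg, hspan⟩

end Local

end Descent

/-! ### Regular sequences along surjections and in polynomial rings -/

section RegularSequencesInPolynomialRings

open RingTheory.Sequence

lemma ofList_append_eq_comap {P C : Type*} [CommRing P] [CommRing C] {e : P →+* C}
    (he : Function.Surjective e) {xs : List P} (hxs : Ideal.ofList xs = RingHom.ker e)
    (l : List P) : Ideal.ofList (xs ++ l) = (Ideal.ofList (l.map e)).comap e := by
  rw [Ideal.ofList_append, ← Ideal.map_ofList, Ideal.comap_map_of_surjective e he, sup_comm, hxs]
  rfl

lemma isWeaklyRegular_append_of_map {P C : Type*} [CommRing P] [CommRing C] {e : P →+* C}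
    (he : Function.Surjective e) {xs l : List P} (hker : Ideal.ofList xs = RingHom.ker e)
    (hxs : IsWeaklyRegular P xs) (hl : IsWeaklyRegular C (l.map e)) :
    IsWeaklyRegular P (xs ++ l) := by
  induction l using List.reverseRecOn with
  | nil => simpa using hxs
  | append_singleton l r ih =>
    rw [List.map_append, List.map_singleton, isWeaklyRegular_append_singleton_iff] at hl
    rw [← List.append_assoc, isWeaklyRegular_append_singleton_iff]
    refine ⟨ih hl.1, fun a ha ↦ ?_⟩
    rw [ofList_append_eq_comap he hker, Ideal.mem_comap] at ha ⊢
    exact hl.2 _ (by rwa [← map_mul])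

lemma generatedByRegularSequence_ker_comp {P C T : Type*} [CommRing P] [CommRing C] [CommRing T]
    {e : P →+* C} {f : C →+* T} (he : Function.Surjective e)
    (hker : GeneratedByRegularSequence P (RingHom.ker e))
    (hf : GeneratedByRegularSequence C (RingHom.ker f)) :
    GeneratedByRegularSequence P (RingHom.ker (f.comp e)) := by
  obtain ⟨xs, hxs, hxs_span⟩ := hker
  obtain ⟨ys, hys, hys_span⟩ := hf
  obtain ⟨l, rfl⟩ := List.map_surjective_iff.2 he ys
  have hspan : Ideal.ofList (xs ++ l) = RingHom.ker (f.comp e) := by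
    rw [ofList_append_eq_comap he hxs_span, ← RingHom.comap_ker, ← hys_span]
  have hne : Ideal.ofList (xs ++ l) ≠ ⊤ := by
    rw [ofList_append_eq_comap he hxs_span]
    exact Ideal.comap_ne_top _ (isRegular_iff_ofList_ne_top.1 hys).2
  exact ⟨xs ++ l, isRegular_iff_ofList_ne_top.2
    ⟨isWeaklyRegular_append_of_map he hxs_span hxs.1 hys.1, hne⟩, hspan⟩

open MvPolynomial

variable {σ A : Type*} [CommRing A] (b : σ → A)

lemma eq_zero_of_X_sub_C_mul_eq_zero {i : σ} {f : MvPolynomial σ A}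
    (hf : (X i - C (b i)) * f = 0) : f = 0 := by
  let translate (c : σ → A) : MvPolynomial σ A →ₐ[A] MvPolynomial σ A := aeval fun j ↦ X j + C (c j)
  have hinv : (translate (-b)).comp (translate b) = AlgHom.id A _ := by
    ext j : 1
    simp [translate]
  have h : X i * translate b f = 0 := by simpa [translate] using congrArg (translate b) hf
  have h0 : translate b f = 0 := (isRegular_X (n := i)).left (by simpa using h)
  calc f = translate (-b) (translate b f) := congr($hinv.symm f)
    _ = 0 := by rw [h0, map_zero]

open Classical in
/-- The substitution `X i ↦ b i` for the indices `i` in `L`. -/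
noncomputable def substOn (L : List σ) : MvPolynomial σ A →ₐ[A] MvPolynomial σ A :=
  aeval fun i ↦ if i ∈ L then C (b i) else X i

lemma ofList_map_X_sub_C_eq_ker_substOn (L : List σ) :
    Ideal.ofList (L.map fun i ↦ X i - C (b i)) = RingHom.ker (substOn b L) := by
  set I := Ideal.ofList (L.map fun i ↦ (X i - C (b i) : MvPolynomial σ A))
  refine le_antisymm (Ideal.span_le.2 fun x hx ↦ ?_) fun f hf ↦ ?_
  · obtain ⟨i, hi, rfl⟩ := List.mem_map.1 hx
    simp [substOn, hi]
  · have hmk : (Ideal.Quotient.mkₐ A I).comp (substOn b L) = Ideal.Quotient.mkₐ A I := by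
      ext i : 1
      by_cases hi : i ∈ L
      · simp only [substOn, AlgHom.comp_apply, aeval_X, hi, if_true, Ideal.Quotient.mkₐ_eq_mk]
        refine (Ideal.Quotient.eq.2 (Ideal.subset_span ?_)).symm
        exact List.mem_map.2 ⟨i, hi, rfl⟩
      · simp [substOn, hi]
    refine Ideal.Quotient.eq_zero_iff_mem.1 ?_
    calc Ideal.Quotient.mk I f = Ideal.Quotient.mk I (substOn b L f) := congr($hmk.symm f)
      _ = 0 := by rw [RingHom.mem_ker.1 hf, map_zero]

lemma isWeaklyRegular_map_X_sub_C {L : List σ} (hL : L.Nodup) :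
    IsWeaklyRegular (MvPolynomial σ A) (L.map fun i ↦ X i - C (b i)) := by
  induction L using List.reverseRecOn with
  | nil => exact IsWeaklyRegular.nil _ _
  | append_singleton L i ih =>
    obtain ⟨hL, -, hi⟩ := List.nodup_append.1 hL
    rw [List.map_append, List.map_singleton, isWeaklyRegular_append_singleton_iff]
    refine ⟨ih hL, fun f hf ↦ ?_⟩
    rw [ofList_map_X_sub_C_eq_ker_substOn, RingHom.mem_ker] at hf ⊢
    have hi : i ∉ L := fun h ↦ hi i h i (by simp) rfl
    exact eq_zero_of_X_sub_C_mul_eq_zero b (by simpa [substOn, hi] using hf)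

lemma ofList_finRange_X_sub_C_eq_ker_aeval {n : ℕ} (b : Fin n → A) :
    Ideal.ofList ((List.finRange n).map fun i ↦ X i - C (b i)) =
      RingHom.ker (aeval b : MvPolynomial (Fin n) A →ₐ[A] A) := by
  have hsubst : substOn b (List.finRange n) = (Algebra.ofId A _).comp (aeval b) := by
    ext i : 1
    simp [substOn, Algebra.ofId_apply]
  rw [ofList_map_X_sub_C_eq_ker_substOn, hsubst]
  ext f
  simp [Algebra.ofId_apply]

variable {n : ℕ} (b : Fin n → A) (l : List A)

lemma map_aeval_map_C : (l.map (C (σ := Fin n))).map (aeval b : _ →ₐ[A] A).toRingHom = l := by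
  simp [Function.comp_def]

lemma aeval_toRingHom_surjective :
    Function.Surjective (aeval b : MvPolynomial (Fin n) A →ₐ[A] A).toRingHom :=
  fun c ↦ ⟨C c, by simp⟩

lemma isWeaklyRegular_X_sub_C_append_map_C {l : List A} (hl : IsWeaklyRegular A l) :
    IsWeaklyRegular (MvPolynomial (Fin n) A)
      ((List.finRange n).map (fun i ↦ X i - C (b i)) ++ l.map C) :=
  isWeaklyRegular_append_of_map (aeval_toRingHom_surjective b)
    (ofList_finRange_X_sub_C_eq_ker_aeval b)
    (isWeaklyRegular_map_X_sub_C b (List.nodup_finRange n)) (by rwa [map_aeval_map_C])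

lemma ofList_X_sub_C_append_map_C :
    Ideal.ofList ((List.finRange n).map (fun i ↦ X i - C (b i)) ++ l.map C) =
      (Ideal.ofList l).comap (aeval b : MvPolynomial (Fin n) A →ₐ[A] A) := by
  have h := ofList_append_eq_comap (aeval_toRingHom_surjective b)
    (ofList_finRange_X_sub_C_eq_ker_aeval b) (l.map C)
  rwa [map_aeval_map_C] at h

end RegularSequencesInPolynomialRings

/-! ### Localizations of surjections and of tensor products -/

section Localizations

open RingTheory.Sequence MvPolynomial

section LocalizedSurjections

variable {P C P' C' : Type*} [CommRing P] [CommRing C] [CommRing P'] [CommRing C']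
  [Algebra P P'] [Algebra C C'] {g : P →+* C} {γ : P' →+* C'}

lemma surjective_of_isLocalization_atPrime (hg : Function.Surjective g) (q : Ideal C) [q.IsPrime]
    [IsLocalization.AtPrime P' (q.comap g)] [IsLocalization.AtPrime C' q]
    (hγ : ∀ a, γ (algebraMap P P' a) = algebraMap C C' (g a)) : Function.Surjective γ := by
  have hmap := q.map_primeCompl_comap_of_surjective g hg
  have : IsLocalization ((q.comap g).primeCompl.map g) C' := by rwa [hmap]
  have hγ' : γ = IsLocalization.map C' g ((q.comap g).primeCompl.le_comap_map (f := g)) :=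
    IsLocalization.ringHom_ext (q.comap g).primeCompl <| RingHom.ext fun a ↦ by
      rw [RingHom.comp_apply, hγ, IsLocalization.map_comp, RingHom.comp_apply]
  exact hγ' ▸ IsLocalization.map_surjective_of_surjective (q.comap g).primeCompl P' C' hg

lemma ker_of_isLocalization_atPrime (hg : Function.Surjective g) (q : Ideal C) [q.IsPrime]
    [IsLocalization.AtPrime P' (q.comap g)] [IsLocalization.AtPrime C' q]
    (hγ : ∀ a, γ (algebraMap P P' a) = algebraMap C C' (g a)) :
    RingHom.ker γ = (RingHom.ker g).map (algebraMap P P') := by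
  have hmap := q.map_primeCompl_comap_of_surjective g hg
  have hγ' : γ = IsLocalization.map C' g (hmap.symm ▸ Submonoid.le_comap_map _) :=
    IsLocalization.ringHom_ext (q.comap g).primeCompl <| RingHom.ext fun a ↦ by simp [hγ]
  rw [hγ', IsLocalization.ker_map C' g hmap]

lemma generatedByRegularSequence_ker_of_isLocalization_atPrime (hg : Function.Surjective g)
    (q : Ideal C) [q.IsPrime] [IsLocalization.AtPrime P' (q.comap g)] [IsLocalization.AtPrime C' q]
    (hγ : ∀ a, γ (algebraMap P P' a) = algebraMap C C' (g a)) {l : List P}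
    (hl : IsWeaklyRegular P l) (hker : Ideal.ofList l = RingHom.ker g) :
    GeneratedByRegularSequence P' (RingHom.ker γ) := by
  have : Module.Flat P P' := IsLocalization.flat P' (q.comap g).primeCompl
  have : Nontrivial C' := IsLocalization.AtPrime.nontrivial C' q
  have hspan : Ideal.ofList (l.map (algebraMap P P')) = RingHom.ker γ := by
    rw [← Ideal.map_ofList, hker, ker_of_isLocalization_atPrime hg q hγ]
  refine ⟨l.map (algebraMap P P'), isRegular_iff_ofList_ne_top.2 ⟨hl.of_flat, ?_⟩, hspan⟩
  exact hspan ▸ RingHom.ker_ne_top γ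

variable (P' C') in
lemma exists_surjective_generatedByRegularSequence_ker (hg : Function.Surjective g)
    (q : Ideal C) [q.IsPrime] [IsLocalization.AtPrime P' (q.comap g)] [IsLocalization.AtPrime C' q]
    {l : List P} (hl : IsWeaklyRegular P l) (hker : Ideal.ofList l = RingHom.ker g) :
    ∃ γ : P' →+* C', (∀ a, γ (algebraMap P P' a) = algebraMap C C' (g a)) ∧
      Function.Surjective γ ∧ GeneratedByRegularSequence P' (RingHom.ker γ) := by
  let γ : P' →+* C' := IsLocalization.map C' g (M := (q.comap g).primeCompl) (T := q.primeCompl)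
    fun _ hx ↦ hx
  have hγ (a : P) : γ (algebraMap P P' a) = algebraMap C C' (g a) := IsLocalization.map_eq _ a
  exact ⟨γ, hγ, surjective_of_isLocalization_atPrime hg q hγ,
    generatedByRegularSequence_ker_of_isLocalization_atPrime hg q hγ hl hker⟩

end LocalizedSurjections

lemma exists_algebra_isLocalization_atPrime_quotient {D Z D' : Type*} [CommRing D] [CommRing Z]
    [CommRing D'] [Algebra D D'] {g : D →+* Z} (hg : Function.Surjective g) (q : Ideal Z)
    [q.IsPrime] [IsLocalization.AtPrime D' (q.comap g)] :
    ∃ _ : Algebra Z (D' ⧸ (RingHom.ker g).map (algebraMap D D')),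
      IsLocalization.AtPrime (D' ⧸ (RingHom.ker g).map (algebraMap D D')) q ∧
      ∀ d, algebraMap Z (D' ⧸ (RingHom.ker g).map (algebraMap D D')) (g d) =
        Ideal.Quotient.mk _ (algebraMap D D' d) := by
  set J := (RingHom.ker g).map (algebraMap D D')
  have hker : RingHom.ker g ≤ RingHom.ker ((Ideal.Quotient.mk J).comp (algebraMap D D')) :=
    fun d hd ↦ Ideal.Quotient.eq_zero_iff_mem.2 (Ideal.mem_map_of_mem _ hd)
  let θ : Z →+* D' ⧸ J := RingHom.liftOfSurjective g hg ⟨_, hker⟩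
  have hθ (d : D) : θ (g d) = Ideal.Quotient.mk J (algebraMap D D' d) :=
    RingHom.liftOfRightInverse_comp_apply _ _ _ ⟨_, hker⟩ d
  let : Algebra Z (D' ⧸ J) := θ.toAlgebra
  refine ⟨θ.toAlgebra, ?_, hθ⟩
  have := IsLocalization.of_surjective (q.comap g).primeCompl D' g hg (Ideal.Quotient.mk J)
    Ideal.Quotient.mk_surjective (RingHom.ext fun d ↦ (hθ d).symm) Ideal.mk_ker.le
  rwa [q.map_primeCompl_comap_of_surjective g hg] at this

section TensorPolynomial

variable {R : Type*} [CommRing R] (A B : Type*) [CommRing A] [CommRing B] [Algebra R A]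
  [Algebra R B] {n : ℕ}

/-- The base change `B[X₁, …, Xₙ] → B ⊗[R] A` of the structure map of an algebra `A` over the
polynomial ring `R[X₁, …, Xₙ]`. -/
noncomputable def tensorAeval [Algebra (MvPolynomial (Fin n) R) A] :
    MvPolynomial (Fin n) B →ₐ[B] B ⊗[R] A :=
  aeval fun i ↦ 1 ⊗ₜ algebraMap (MvPolynomial (Fin n) R) A (X i)

variable [Algebra (MvPolynomial (Fin n) R) A] [IsScalarTower R (MvPolynomial (Fin n) R) A]

lemma isLocalization_tensorAeval (M : Submonoid (MvPolynomial (Fin n) R)) [IsLocalization M A] :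
    letI := (tensorAeval (R := R) A B (n := n)).toAlgebra
    IsLocalization (M.map (map (algebraMap R B))) (B ⊗[R] A) := by
  let e := (algebraTensorAlgEquiv (σ := Fin n) R B).toRingEquiv
  let : Algebra (B ⊗[R] MvPolynomial (Fin n) R) (B ⊗[R] A) := (Algebra.TensorProduct.map
    (AlgHom.id B B) (IsScalarTower.toAlgHom R (MvPolynomial (Fin n) R) A)).toRingHom.toAlgebra
  have : IsScalarTower B (B ⊗[R] MvPolynomial (Fin n) R) (B ⊗[R] A) :=
    .of_algHom (Algebra.TensorProduct.map
      (AlgHom.id B B) (IsScalarTower.toAlgHom R (MvPolynomial (Fin n) R) A))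
  have := IsLocalization.tensorProduct_tensorProduct_right R B M A
    (RingHom.ext fun _ ↦ rfl)
  have := IsLocalization.isLocalization_of_base_ringEquiv
    (M.map (Algebra.TensorProduct.includeRight (R := R) (A := B))) (B ⊗[R] A) e
  convert this using 1
  · ext p
    simp [e, Submonoid.mem_map]
  · refine congrArg RingHom.toAlgebra (ringHom_ext (fun b ↦ ?_) fun i ↦ ?_)
    · have he : e.symm (C b) = b ⊗ₜ 1 := (RingEquiv.symm_apply_eq _).2 (by simp [e, smul_eq_C_mul])
      simp [tensorAeval, he, RingHom.algebraMap_toAlgebra]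
    · have he : e.symm (X i) = 1 ⊗ₜ X i := (RingEquiv.symm_apply_eq _).2 (by simp [e])
      simp [tensorAeval, he, RingHom.algebraMap_toAlgebra]

lemma isLocalization_atPrime_comap_tensorAeval (M : Submonoid (MvPolynomial (Fin n) R))
    [IsLocalization M A] (q : Ideal (B ⊗[R] A)) [q.IsPrime] (L : Type*) [CommRing L]
    [Algebra (B ⊗[R] A) L] [IsLocalization.AtPrime L q] :
    letI := ((algebraMap (B ⊗[R] A) L).comp (tensorAeval (R := R) A B (n := n)).toRingHom).toAlgebra
    IsLocalization.AtPrime L (q.comap (tensorAeval (R := R) A B (n := n))) := by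
  let := (tensorAeval (R := R) A B (n := n)).toAlgebra
  have := isLocalization_tensorAeval A B M
  let := ((algebraMap (B ⊗[R] A) L).comp (tensorAeval (R := R) A B (n := n)).toRingHom).toAlgebra
  have : IsScalarTower (MvPolynomial (Fin n) B) (B ⊗[R] A) L := .of_algebraMap_eq fun _ ↦ rfl
  exact IsLocalization.isLocalization_isLocalization_atPrime_isLocalization
    (M.map (map (algebraMap R B))) L q

lemma isNoetherianRing_tensorProduct_of_essFiniteType (R A B : Type*) [CommRing R] [CommRing A]
    [CommRing B] [Algebra R A] [Algebra R B] [Algebra.EssFiniteType R A] [IsNoetherianRing B] :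
    IsNoetherianRing (B ⊗[R] A) :=
  Algebra.EssFiniteType.isNoetherianRing B (B ⊗[R] A)

end TensorPolynomial

section ClosedFibre

variable (R B A : Type*) [CommRing R] [IsLocalRing R] [CommRing B] [Algebra R B]

noncomputable instance closedFibreAlgebra :
    Algebra (ResidueField R) (B ⧸ (maximalIdeal R).map (algebraMap R B)) :=
  inferInstanceAs (Algebra (R ⧸ maximalIdeal R) _)

instance closedFibre_isScalarTower :
    IsScalarTower R (ResidueField R) (B ⧸ (maximalIdeal R).map (algebraMap R B)) :=
  inferInstanceAs (IsScalarTower R (R ⧸ maximalIdeal R) _)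

variable [CommRing A] [IsLocalRing A] [Algebra R A] [IsLocalHom (algebraMap R A)]

/-- The surjection from `B ⊗[R] A` onto the tensor product, over the residue field of `R`, of the
closed fibre of `R → B` with the residue field of `A`. -/
noncomputable def tensorToClosedFibre : B ⊗[R] A →+*
    (B ⧸ (maximalIdeal R).map (algebraMap R B)) ⊗[ResidueField R] ResidueField A :=
  ((Algebra.TensorProduct.mapOfCompatibleSMul (ResidueField R) R R _ _).comp
    (Algebra.TensorProduct.map (Ideal.Quotient.mkₐ R ((maximalIdeal R).map (algebraMap R B)))
      (IsScalarTower.toAlgHom R A (ResidueField A)))).toRingHom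

@[simp]
lemma tensorToClosedFibre_tmul (b : B) (a : A) :
    tensorToClosedFibre R B A (b ⊗ₜ a) = Ideal.Quotient.mk _ b ⊗ₜ residue A a :=
  rfl

lemma tensorToClosedFibre_surjective : Function.Surjective (tensorToClosedFibre R B A) :=
  (Algebra.TensorProduct.mapOfCompatibleSMul_surjective (ResidueField R) R R _ _).comp <|
    Algebra.TensorProduct.map_surjective _ _ Ideal.Quotient.mk_surjective residue_surjective

lemma ker_tensorToClosedFibre : RingHom.ker (tensorToClosedFibre R B A) =
    (maximalIdeal A).map (Algebra.TensorProduct.includeRight : A →ₐ[R] B ⊗[R] A).toRingHom := by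
  set f := Algebra.TensorProduct.map (Ideal.Quotient.mkₐ R ((maximalIdeal R).map (algebraMap R B)))
      (IsScalarTower.toAlgHom R A (ResidueField A))
  have hinj : Function.Injective (Algebra.TensorProduct.mapOfCompatibleSMul (ResidueField R) R R
      (B ⧸ (maximalIdeal R).map (algebraMap R B)) (ResidueField A)) :=
    have : TensorProduct.CompatibleSMul R (ResidueField R)
        (B ⧸ (maximalIdeal R).map (algebraMap R B)) (ResidueField A) :=
      .of_algebraMap_surjective _ _ residue_surjective
    (Algebra.TensorProduct.equivOfCompatibleSMul (ResidueField R) R R _ _).injective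
  have hker : RingHom.ker (tensorToClosedFibre R B A) = RingHom.ker f :=
    Ideal.ext fun _ ↦ map_eq_zero_iff _ hinj
  have hmk : RingHom.ker (Ideal.Quotient.mkₐ R ((maximalIdeal R).map (algebraMap R B))) =
      (maximalIdeal R).map (algebraMap R B) :=
    Ideal.mk_ker
  have hres : RingHom.ker (IsScalarTower.toAlgHom R A (ResidueField A)) = maximalIdeal A :=
    Ideal.mk_ker
  rw [hker, Algebra.TensorProduct.map_ker _ _ Ideal.Quotient.mk_surjective residue_surjective,
    hmk, hres]
  refine sup_eq_right.2 (Ideal.map_le_iff_le_comap.2 (Ideal.map_le_iff_le_comap.2 fun r hr ↦ ?_))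
  have hcomm : (Algebra.TensorProduct.includeLeft : B →ₐ[R] B ⊗[R] A) (algebraMap R B r) =
      (Algebra.TensorProduct.includeRight : A →ₐ[R] B ⊗[R] A) (algebraMap R A r) := by
    rw [AlgHom.commutes, AlgHom.commutes]
  rw [Ideal.mem_comap, Ideal.mem_comap, hcomm]
  exact Ideal.mem_map_of_mem _ ((maximalIdeal_comap (algebraMap R A)).ge hr)

end ClosedFibre

end Localizations

/-! ### Separable residue field extensions -/

section SeparableExtensions

open Algebra.TensorProduct (productMap)
open MvPolynomial (aeval)
open RingTheory.Sequence

lemma linearIndepOn_pow_of_isReduced_algebraicClosure_tensor (p : ℕ) [Fact p.Prime]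
    (k ℓ : Type*) [Field k] [CharP k p] [Field ℓ] [Algebra k ℓ]
    [IsReduced (AlgebraicClosure k ⊗[k] ℓ)] {s : Finset ℓ}
    (hs : LinearIndepOn k _root_.id (s : Set ℓ)) :
    LinearIndepOn k (· ^ p) (s : Set ℓ) := by
  rw [linearIndepOn_finset_iff]
  intro c hc i hi
  have hp : p ≠ 0 := (Fact.out : p.Prime).ne_zero
  choose b hb using fun a : k ↦
    IsAlgClosed.exists_pow_nat_eq (algebraMap k (AlgebraicClosure k) a) (Nat.pos_of_ne_zero hp)
  have : CharP (AlgebraicClosure k ⊗[k] ℓ) p :=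
    charP_of_injective_algebraMap (algebraMap k _).injective p
  have hpow : (∑ j ∈ s, b (c j) ⊗ₜ[k] j : AlgebraicClosure k ⊗[k] ℓ) ^ p = 0 := by
    simp_rw [sum_pow_char, Algebra.TensorProduct.tmul_pow, hb, Algebra.algebraMap_eq_smul_one,
      TensorProduct.smul_tmul]
    rw [← TensorProduct.tmul_sum, hc, TensorProduct.tmul_zero]
  have hsum : ∑ j : s, b (c j) • (1 ⊗ₜ[k] j.1 : AlgebraicClosure k ⊗[k] ℓ) = 0 := by
    rw [← Finset.sum_coe_sort] at hpow
    simpa [TensorProduct.smul_tmul'] using eq_zero_of_pow_eq_zero hpow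
  have hlin : LinearIndependent (AlgebraicClosure k)
      fun j : s ↦ (1 ⊗ₜ[k] j.1 : AlgebraicClosure k ⊗[k] ℓ) :=
    Module.Flat.linearIndependent_one_tmul hs
  have hbi : b (c i) = 0 := Fintype.linearIndependent_iff.1 hlin _ hsum ⟨i, hi⟩
  exact (map_eq_zero (algebraMap k (AlgebraicClosure k))).1 (by rw [← hb, hbi, zero_pow hp])

lemma exists_algebraicIndependent_isSeparable_adjoin {k ℓ : Type u} [Field k] [Field ℓ]
    [Algebra k ℓ] [Algebra.EssFiniteType k ℓ] (h : IsSeparableFieldExtension k ℓ) :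
    ∃ (d : ℕ) (t : Fin d → ℓ), AlgebraicIndependent k t ∧
      Algebra.IsSeparable (IntermediateField.adjoin k (Set.range t)) ℓ := by
  suffices ∃ s : Finset ℓ, IsTranscendenceBasis k ((↑) : s → ℓ) ∧
      Algebra.IsSeparable (IntermediateField.adjoin k (s : Set ℓ)) ℓ by
    obtain ⟨s, hs, hsep⟩ := this
    have hrange : Set.range (fun i ↦ (s.equivFin.symm i : ℓ)) = s := by
      simpa [Function.comp_def] using s.equivFin.symm.surjective.range_comp Subtype.val
    exact ⟨s.card, fun i ↦ (s.equivFin.symm i : ℓ), hs.1.comp _ s.equivFin.symm.injective,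
      by rwa [hrange]⟩
  obtain _ | ⟨p, hp, _⟩ := CharP.exists' k
  · exact exists_isTranscendenceBasis_and_isSeparable_of_perfectField k ℓ
  · have : ExpChar k p := .prime hp.out
    have := h (AlgebraicClosure k) inferInstance inferInstance
    exact exists_isTranscendenceBasis_and_isSeparable_of_linearIndepOn_pow_of_essFiniteType
      p hp.out fun s hs ↦ linearIndepOn_pow_of_isReduced_algebraicClosure_tensor p k ℓ hs

lemma ringHom_eq_of_isSeparable_adjoin {k ℓ T : Type*} [Field k] [Field ℓ] [Algebra k ℓ]
    [CommRing T] [IsLocalRing T] [IsNoetherianRing T] {s : Set ℓ}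
    [Algebra.IsSeparable (IntermediateField.adjoin k s) ℓ] {f g : ℓ →+* T}
    (halg : ∀ a, f (algebraMap k ℓ a) = g (algebraMap k ℓ a)) (hs : ∀ x ∈ s, f x = g x)
    (hmod : ∀ x, f x - g x ∈ maximalIdeal T) : f = g := by
  let L := IntermediateField.adjoin k s
  have hL : L ≤ { RingHom.eqLocusField f g with algebraMap_mem' := halg } :=
    IntermediateField.adjoin_le_iff.2 hs
  let := (f.comp (algebraMap L ℓ)).toAlgebra
  let f' : ℓ →ₐ[L] T := { f with commutes' := fun _ ↦ rfl }
  let g' : ℓ →ₐ[L] T := { g with commutes' := fun x ↦ (hL x.2).symm }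
  have : Algebra.FormallyUnramified L ℓ := Algebra.FormallyUnramified.of_isSeparable _ _
  have heq : f' = g' :=
    Algebra.FormallyUnramified.ext_of_iInf (I := maximalIdeal T)
      (Ideal.iInf_pow_eq_bot_of_isLocalRing _ (maximalIdeal.isMaximal _).ne_top)
      fun x ↦ Ideal.Quotient.eq.2 (hmod x)
  exact congrArg AlgHom.toRingHom heq

lemma flat_aeval_of_algebraicIndependent {k ℓ : Type*} [Field k] [Field ℓ] [Algebra k ℓ] {d : ℕ}
    {t : Fin d → ℓ} (ht : AlgebraicIndependent k t) :
    (aeval t : MvPolynomial (Fin d) k →ₐ[k] ℓ).toRingHom.Flat := by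
  let := (aeval t : MvPolynomial (Fin d) k →ₐ[k] ℓ).toRingHom.toAlgebra
  have : FaithfulSMul (MvPolynomial (Fin d) k) ℓ := (faithfulSMul_iff_algebraMap_injective _ _).2 ht
  let := FractionRing.liftAlgebra (MvPolynomial (Fin d) k) ℓ
  exact Module.Flat.trans (MvPolynomial (Fin d) k) (FractionRing (MvPolynomial (Fin d) k)) ℓ

lemma flat_aeval_one_tmul {k ℓ : Type*} (C : Type*) [Field k] [Field ℓ] [Algebra k ℓ] [CommRing C]
    [Algebra k C] {d : ℕ} {t : Fin d → ℓ} (ht : AlgebraicIndependent k t) :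
    (aeval fun i ↦ 1 ⊗ₜ t i :
      MvPolynomial (Fin d) C →ₐ[C] C ⊗[k] ℓ).toRingHom.Flat := by
  have hflat : (Algebra.TensorProduct.map (AlgHom.id C C)
      (aeval t : MvPolynomial (Fin d) k →ₐ[k] ℓ)).toRingHom.Flat :=
    RingHom.Flat.tensorProductMap (S := C) (RingHom.Flat.id C)
      (flat_aeval_of_algebraicIndependent ht)
  have hfactor : (aeval fun i ↦ 1 ⊗ₜ t i : MvPolynomial (Fin d) C →ₐ[C] C ⊗[k] ℓ) =
      (Algebra.TensorProduct.map (AlgHom.id C C) (aeval t)).comp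
        (MvPolynomial.algebraTensorAlgEquiv k C).symm.toAlgHom := by
    ext i
    simp
  rw [hfactor]
  exact RingHom.Flat.comp
    (.of_bijective (MvPolynomial.algebraTensorAlgEquiv k C).symm.bijective) hflat

lemma ker_productMap_le_ker_of_isSeparable_adjoin {k ℓ K C T : Type*} [Field k] [Field ℓ]
    [Field K] [CommRing C] [Algebra k ℓ] [Algebra k K] [Algebra k C] {h : C →ₐ[k] K}
    (hh : Function.Surjective h) (g : ℓ →ₐ[k] K) [CommRing T] [IsLocalRing T]
    [IsNoetherianRing T] {s : Set ℓ} [Algebra.IsSeparable (IntermediateField.adjoin k s) ℓ]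
    {w : C ⊗[k] ℓ →+* T} (hC : ∀ c, h c = 0 → w (c ⊗ₜ 1) = 0)
    (hs : ∀ x ∈ s, ∃ c, h c = g x ∧ w (1 ⊗ₜ x) = w (c ⊗ₜ 1))
    (hw : ∀ z, productMap h g z = 0 → w z ∈ maximalIdeal T) :
    RingHom.ker (productMap h g) ≤ RingHom.ker w := by
  let wC : C →+* T := w.comp Algebra.TensorProduct.includeLeftRingHom
  let wℓ : ℓ →+* T := w.comp (Algebra.TensorProduct.includeRight : ℓ →ₐ[k] C ⊗[k] ℓ).toRingHom
  let v : K →+* T := RingHom.liftOfSurjective h.toRingHom hh ⟨wC, fun c ↦ hC c⟩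
  have hv (c : C) : v (h c) = w (c ⊗ₜ 1) :=
    RingHom.liftOfRightInverse_comp_apply _ _ _ ⟨wC, fun c ↦ hC c⟩ c
  have hv_eq : wℓ = v.comp g.toRingHom := by
    refine ringHom_eq_of_isSeparable_adjoin (k := k) (s := s) (fun a ↦ ?_) (fun x hx ↦ ?_)
      fun x ↦ ?_
    · change w (1 ⊗ₜ algebraMap k ℓ a) = v (g (algebraMap k ℓ a))
      rw [g.commutes, ← h.commutes, hv, Algebra.TensorProduct.tmul_one_eq_one_tmul]
    · obtain ⟨c, hc, hwc⟩ := hs x hx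
      exact hwc.trans ((hv c).symm.trans (congrArg v hc))
    · obtain ⟨c, hc⟩ := hh (g x)
      change w (1 ⊗ₜ x) - v (g x) ∈ _
      rw [← hc, hv, ← map_sub]
      exact hw _ (by simp [hc])
  have hfactor (z : C ⊗[k] ℓ) : w z = v (productMap h g z) := by
    induction z with
    | zero => simp only [map_zero]
    | add y z hy hz => simp only [map_add, hy, hz]
    | tmul c x =>
      rw [Algebra.TensorProduct.productMap_apply_tmul, map_mul, hv, ← one_mul x, ← mul_one c,
        ← Algebra.TensorProduct.tmul_mul_tmul, map_mul, one_mul, mul_one]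
      exact congrArg _ congr($hv_eq x)
  intro z hz
  rw [RingHom.mem_ker, hfactor, RingHom.mem_ker.1 hz, map_zero]

section

variable {k ℓ C K : Type u} [Field k] [Field ℓ] [Field K] [CommRing C] [Algebra k ℓ] [Algebra k K]
  [Algebra k C] {h : C →ₐ[k] K} {g : ℓ →ₐ[k] K} {d : ℕ} {t : Fin d → ℓ} {b : Fin d → C}

lemma comap_aeval_ker_eq_comap_ker_productMap (hb : ∀ i, h (b i) = g (t i)) :
    (RingHom.ker h).comap (aeval b) = (RingHom.ker (productMap h g)).comap
      (aeval fun i ↦ 1 ⊗ₜ t i : MvPolynomial (Fin d) C →ₐ[C] C ⊗[k] ℓ).toRingHom := by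
  have hcomp : h.toRingHom.comp (aeval b).toRingHom = (productMap h g).toRingHom.comp
      (aeval fun i ↦ 1 ⊗ₜ t i : MvPolynomial (Fin d) C →ₐ[C] C ⊗[k] ℓ).toRingHom :=
    MvPolynomial.ringHom_ext (by simp [Algebra.TensorProduct.algebraMap_apply]) (by simp [hb])
  ext f
  exact (congr($hcomp f = 0)).to_iff

variable {p : Ideal (C ⊗[k] ℓ)} [p.IsPrime] (E : Type u) [CommRing E] [IsLocalRing E]
  [IsNoetherianRing E] [Algebra (C ⊗[k] ℓ) E] [IsLocalization.AtPrime E p]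

lemma map_comap_aeval_one_tmul_eq_maximalIdeal (hp : p = RingHom.ker (productMap h g))
    (hh : Function.Surjective h) [Algebra.IsSeparable (IntermediateField.adjoin k (Set.range t)) ℓ]
    (hb : ∀ i, h (b i) = g (t i)) :
    letI ψ := (aeval fun i ↦ 1 ⊗ₜ t i : MvPolynomial (Fin d) C →ₐ[C] C ⊗[k] ℓ).toRingHom
    ((p.comap ψ).map ψ).map (algebraMap _ E) = maximalIdeal E := by
  let ψ := (aeval fun i ↦ 1 ⊗ₜ t i : MvPolynomial (Fin d) C →ₐ[C] C ⊗[k] ℓ).toRingHom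
  set I := ((p.comap ψ).map ψ).map (algebraMap _ E)
  have hp_max : p.map (algebraMap _ E) = maximalIdeal E :=
    IsLocalization.AtPrime.map_eq_maximalIdeal p E
  have hI : I ≤ maximalIdeal E := hp_max ▸ Ideal.map_mono Ideal.map_comap_le
  have : Nontrivial (E ⧸ I) :=
    Ideal.Quotient.nontrivial_iff.2 (hI.trans_lt (maximalIdeal.isMaximal E).lt_top).ne
  have : IsLocalRing (E ⧸ I) := .of_surjective' _ Ideal.Quotient.mk_surjective
  have hmem {f} (hf : h (aeval b f) = 0) : algebraMap _ E (ψ f) ∈ I :=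
    Ideal.mem_map_of_mem _ <| Ideal.mem_map_of_mem _ <| by
      rw [hp, ← comap_aeval_ker_eq_comap_ker_productMap hb]
      exact hf
  have hker : p ≤ RingHom.ker ((Ideal.Quotient.mk I).comp (algebraMap _ E)) := by
    rw [hp]
    refine ker_productMap_le_ker_of_isSeparable_adjoin hh g (s := Set.range t) (fun c hc ↦ ?_) ?_
      fun z hz ↦ ?_
    · have hmem_c := hmem (f := MvPolynomial.C c) (by simpa using hc)
      exact Ideal.Quotient.eq_zero_iff_mem.2 (by simpa [ψ] using hmem_c)
    · rintro _ ⟨i, rfl⟩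
      have hmem_i := hmem (f := MvPolynomial.X i - MvPolynomial.C (b i)) (by simp)
      exact ⟨b i, hb i, Ideal.Quotient.eq.2 (by simpa [ψ] using hmem_i)⟩
    · rw [← map_maximalIdeal_of_surjective _ Ideal.Quotient.mk_surjective, ← hp_max, hp]
      exact Ideal.mem_map_of_mem _ (Ideal.mem_map_of_mem _ hz)
  rw [← RingHom.comap_ker, Ideal.mk_ker, ← Ideal.map_le_iff_le_comap, hp_max] at hker
  exact le_antisymm hI hker

lemma generatedByRegularSequence_maximalIdeal_of_isSeparable [Algebra.EssFiniteType k ℓ]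
    (hp : p = RingHom.ker (productMap h g)) (hsep : IsSeparableFieldExtension k ℓ)
    (hh : Function.Surjective h) (hker : GeneratedByRegularSequence C (RingHom.ker h)) :
    GeneratedByRegularSequence E (maximalIdeal E) := by
  obtain ⟨d, t, ht, _⟩ := exists_algebraicIndependent_isSeparable_adjoin hsep
  obtain ⟨rs, hrs, hrs_span⟩ := hker
  choose b hb using fun i ↦ hh (g (t i))
  let ψ := (aeval fun i ↦ 1 ⊗ₜ t i : MvPolynomial (Fin d) C →ₐ[C] C ⊗[k] ℓ).toRingHom
  let L := (List.finRange d).map (fun i ↦ MvPolynomial.X i - MvPolynomial.C (b i)) ++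
    rs.map MvPolynomial.C
  have hL : Ideal.ofList L = p.comap ψ := by
    rw [ofList_X_sub_C_append_map_C, Ideal.ofList, hrs_span, hp,
      comap_aeval_ker_eq_comap_ker_productMap hb]
  have hmax : Ideal.ofList ((L.map ψ).map (algebraMap _ E)) = maximalIdeal E := by
    rw [← Ideal.map_ofList, ← Ideal.map_ofList, hL,
      map_comap_aeval_one_tmul_eq_maximalIdeal E hp hh hb]
  have hflat : Module.Flat (C ⊗[k] ℓ) E := IsLocalization.flat E p.primeCompl
  have hweak : IsWeaklyRegular E ((L.map ψ).map (algebraMap _ E)) := by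
    let := ψ.toAlgebra
    have : Module.Flat (MvPolynomial (Fin d) C) (C ⊗[k] ℓ) := flat_aeval_one_tmul C ht
    exact (isWeaklyRegular_X_sub_C_append_map_C b hrs.1).of_flat.of_flat
  exact ⟨_, isRegular_iff_ofList_ne_top.2
    ⟨hweak, hmax ▸ (maximalIdeal.isMaximal E).ne_top⟩, hmax⟩

end

end SeparableExtensions

/-! ### The closed fibre over a separable residue field extension -/

section SeparableFibre

lemma isSeparableFieldExtension_of_algHom {k ℓ ℓ' : Type u} [Field k] [Field ℓ] [Field ℓ']
    [Algebra k ℓ] [Algebra k ℓ'] (f : ℓ →ₐ[k] ℓ') (h : IsSeparableFieldExtension k ℓ') :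
    IsSeparableFieldExtension k ℓ := fun K _ _ ↦
  have := h K inferInstance inferInstance
  isReduced_of_injective (Algebra.TensorProduct.map (AlgHom.id k K) f)
    (Module.Flat.lTensor_preserves_injective_linearMap f.toLinearMap f.injective)

lemma essFiniteType_residueField (R S : Type*) [CommRing R] [CommRing S] [IsLocalRing R]
    [IsLocalRing S] [Algebra R S] [IsLocalHom (algebraMap R S)] [Algebra.EssFiniteType R S] :
    Algebra.EssFiniteType (ResidueField R) (ResidueField S) :=
  have : Algebra.EssFiniteType R (ResidueField S) :=
    .of_surjective (IsScalarTower.toAlgHom R S (ResidueField S)) residue_surjective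
  .of_comp R _ _

variable {R B T : Type*} [CommRing R] [CommRing B] [CommRing T] [IsLocalRing R] [IsLocalRing T]
  [Algebra R B] [Algebra R T] [IsLocalHom (algebraMap R T)]

/-- The map induced on the closed fibre of `R → B`, with values in the residue field of `T`, by an
`R`-algebra homomorphism `f : B → T`. -/
noncomputable def closedFibreToResidueField (f : B →ₐ[R] T) :
    (B ⧸ (maximalIdeal R).map (algebraMap R B)) →ₐ[ResidueField R] ResidueField T where
  toRingHom := Ideal.Quotient.lift _ ((residue T).comp f.toRingHom) fun b hb ↦ by
    have hle : (maximalIdeal R).map (algebraMap R B) ≤ (maximalIdeal T).comap f := by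
      refine Ideal.map_le_iff_le_comap.2 fun r hr ↦ ?_
      rw [Ideal.mem_comap, Ideal.mem_comap, f.commutes]
      exact (maximalIdeal_comap (algebraMap R T)).ge hr
    exact (residue_eq_zero_iff _).2 (hle hb)
  commutes' a := by
    obtain ⟨r, rfl⟩ := residue_surjective a
    exact congrArg (residue T) (f.commutes r)

lemma closedFibreToResidueField_mk (f : B →ₐ[R] T) (b : B) :
    closedFibreToResidueField f (Ideal.Quotient.mk _ b) = residue T (f b) :=
  rfl

lemma closedFibreToResidueField_surjective {f : B →ₐ[R] T} (hf : Function.Surjective f) :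
    Function.Surjective (closedFibreToResidueField f) :=
  Ideal.Quotient.lift_surjective_of_surjective _ _ (residue_surjective.comp hf)

variable {A : Type*} [CommRing A] [IsLocalRing A] [Algebra R A] [IsLocalHom (algebraMap R A)]

lemma comap_tensorToClosedFibre_ker_productMap (f : B →ₐ[R] T) (g : A →ₐ[R] T) [IsLocalHom g] :
    (RingHom.ker (Algebra.TensorProduct.productMap (closedFibreToResidueField f)
      (ResidueField.mapAlgHom' g))).comap (tensorToClosedFibre R B A) =
      (maximalIdeal T).comap (Algebra.TensorProduct.productMap f g) := by
  have hcomp : (Algebra.TensorProduct.productMap (closedFibreToResidueField f)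
      (ResidueField.mapAlgHom' g)).toRingHom.comp (tensorToClosedFibre R B A) =
      (residue T).comp (Algebra.TensorProduct.productMap f g).toRingHom := by
    refine Algebra.TensorProduct.ringHom_ext ?_ ?_
    · ext b
      simp [closedFibreToResidueField_mk]
    · ext a
      simp
  ext z
  exact (congr($hcomp z = 0)).to_iff.trans (residue_eq_zero_iff _)

lemma generatedByRegularSequence_closedFibre_of_isSeparable {R B A T D' : Type u} [CommRing R]
    [CommRing B] [CommRing A] [CommRing T] [CommRing D'] [IsLocalRing R] [IsLocalRing A]
    [IsLocalRing T] [Algebra R B] [Algebra R A] [Algebra R T] [IsLocalHom (algebraMap R A)]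
    [IsLocalHom (algebraMap R T)] [Algebra.EssFiniteType R A]
    (hsep : IsSeparableFieldExtension (ResidueField R) (ResidueField A)) {f : B →ₐ[R] T}
    (hf : Function.Surjective f) (g : A →ₐ[R] T) [IsLocalHom g]
    (hreg : IsRegularLocal (B ⧸ (maximalIdeal R).map (algebraMap R B)))
    {q : Ideal (B ⊗[R] A)} [q.IsPrime]
    (hq : q = (maximalIdeal T).comap (Algebra.TensorProduct.productMap f g))
    [IsLocalRing D'] [IsNoetherianRing D'] [Algebra (B ⊗[R] A) D'] [IsLocalization.AtPrime D' q] :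
    letI J := ((maximalIdeal A).map
      (Algebra.TensorProduct.includeRight : A →ₐ[R] B ⊗[R] A).toRingHom).map (algebraMap _ D')
    GeneratedByRegularSequence (D' ⧸ J) ((maximalIdeal D').map (Ideal.Quotient.mk J)) := by
  obtain ⟨-, _, hC⟩ := hreg
  set h := closedFibreToResidueField f
  have hh : Function.Surjective h := closedFibreToResidueField_surjective hf
  have hker : RingHom.ker h = maximalIdeal _ :=
    eq_maximalIdeal (RingHom.ker_isMaximal_of_surjective h.toRingHom hh)
  let Q := RingHom.ker (Algebra.TensorProduct.productMap h (ResidueField.mapAlgHom' g))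
  have hQ : Q.IsPrime := RingHom.ker_isPrime _
  have hQq : Q.comap (tensorToClosedFibre R B A) = q :=
    (comap_tensorToClosedFibre_ker_productMap f g).trans hq.symm
  have := essFiniteType_residueField R A
  rw [← ker_tensorToClosedFibre]
  have : IsLocalization.AtPrime D' (Q.comap (tensorToClosedFibre R B A)) := by
    simpa only [hQq]
  obtain ⟨_, hE, -⟩ := exists_algebra_isLocalization_atPrime_quotient
    (tensorToClosedFibre_surjective R B A) Q (D' := D')
  have := IsLocalization.AtPrime.isLocalRing
    (D' ⧸ (RingHom.ker (tensorToClosedFibre R B A)).map (algebraMap _ D')) Q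
  rw [map_maximalIdeal_of_surjective _ Ideal.Quotient.mk_surjective]
  exact generatedByRegularSequence_maximalIdeal_of_isSeparable (p := Q)
    (g := ResidueField.mapAlgHom' g) _ rfl hsep hh (hker ▸ hC)

end SeparableFibre

/-! ### Complete intersection presentations -/

section Presentations

open RingTheory.Sequence MvPolynomial

lemma exists_isUnit_aeval_mul_eq_aeval (R S : Type*) [CommRing R] [CommRing S] [Algebra R S]
    [Algebra.EssFiniteType R S] :
    ∃ (n : ℕ) (x : Fin n → S), ∀ s : S, ∃ f h : MvPolynomial (Fin n) R,
      IsUnit (aeval x h) ∧ s * aeval x h = aeval x f := by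
  obtain ⟨τ, hτ⟩ := (Algebra.essFiniteType_iff R S).1 inferInstance
  refine ⟨τ.card, fun i ↦ (τ.equivFin.symm i : S), fun s ↦ ?_⟩
  have hrange : Set.range (fun i ↦ (τ.equivFin.symm i : S)) = (τ : Set S) := by
    change Set.range (Subtype.val ∘ τ.equivFin.symm) = _
    rw [τ.equivFin.symm.surjective.range_comp]
    exact Subtype.range_coe
  obtain ⟨t, ht, hunit, hst⟩ := hτ s
  rw [← hrange, Algebra.adjoin_range_eq_range_aeval] at ht hst
  obtain ⟨h, rfl⟩ := ht
  obtain ⟨f, hf⟩ := hst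
  exact ⟨f, h, hunit, hf.symm⟩

lemma flat_includeRight (R A B : Type*) [CommRing R] [CommRing A] [CommRing B] [Algebra R A]
    [Algebra R B] [Module.Flat R B] :
    (Algebra.TensorProduct.includeRight : A →ₐ[R] B ⊗[R] A).toRingHom.Flat := by
  have h : (algebraMap A (A ⊗[R] B)).Flat := RingHom.flat_algebraMap_iff.2 inferInstance
  exact h.comp (.of_bijective (Algebra.TensorProduct.comm R A B).bijective)

lemma surjective_and_generatedByRegularSequence_ker_of_productMap {R A B T D' : Type*}
    [CommRing R] [CommRing A] [CommRing B] [CommRing T] [CommRing D'] [IsLocalRing T]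
    [Algebra R A] [Algebra R B] [Algebra R T] {n : ℕ} [Algebra (MvPolynomial (Fin n) R) A]
    [IsScalarTower R (MvPolynomial (Fin n) R) A] (M : Submonoid (MvPolynomial (Fin n) R))
    [IsLocalization M A] {f : B →ₐ[R] T} (hf : Function.Surjective f)
    (hker : GeneratedByRegularSequence B (RingHom.ker f)) (g : A →ₐ[R] T) [Algebra (B ⊗[R] A) D']
    [IsLocalization.AtPrime D' ((maximalIdeal T).comap (Algebra.TensorProduct.productMap f g))]
    {π : D' →+* T}
    (hπ : ∀ d, π (algebraMap _ D' d) = Algebra.TensorProduct.productMap f g d) :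
    Function.Surjective π ∧ GeneratedByRegularSequence D' (RingHom.ker π) := by
  obtain ⟨l, hl, hspan⟩ := hker
  choose b hb using fun i : Fin n ↦ hf (g (algebraMap (MvPolynomial (Fin n) R) A (X i)))
  let e : MvPolynomial (Fin n) B →+* T := f.toRingHom.comp (aeval b).toRingHom
  have he : Function.Surjective e := hf.comp (aeval_toRingHom_surjective b)
  have hfactor : (Algebra.TensorProduct.productMap f g).toRingHom.comp
      (tensorAeval (R := R) A B).toRingHom = e :=
    ringHom_ext (fun c ↦ by simp [e, tensorAeval]) fun i ↦ by simp [e, tensorAeval, hb]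
  let := ((algebraMap (B ⊗[R] A) D').comp (tensorAeval (R := R) A B (n := n)).toRingHom).toAlgebra
  have : IsLocalization.AtPrime D' ((maximalIdeal T).comap e) := by
    simp_rw [← hfactor]
    exact isLocalization_atPrime_comap_tensorAeval A B M
      ((maximalIdeal T).comap (Algebra.TensorProduct.productMap f g)) D'
  have : IsLocalization.AtPrime T (maximalIdeal T) := .self fun t ht ↦ by
    simpa [IsUnit.mem_submonoid_iff] using ht
  have hπ' (p : MvPolynomial (Fin n) B) : π (algebraMap _ D' p) = algebraMap T T (e p) :=
    (hπ _).trans congr($hfactor p)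
  refine ⟨surjective_of_isLocalization_atPrime he (maximalIdeal T) hπ',
    generatedByRegularSequence_ker_of_isLocalization_atPrime he (maximalIdeal T) hπ'
      (isWeaklyRegular_X_sub_C_append_map_C b hl.1) ?_⟩
  rw [ofList_X_sub_C_append_map_C]
  exact congrArg (Ideal.comap (aeval b : MvPolynomial (Fin n) B →ₐ[B] B)) hspan

lemma maximalIdeal_le_map_sup_ker {A S D T : Type*} [CommRing A] [CommRing S] [CommRing D]
    [CommRing T] [IsLocalRing A] [IsLocalRing S] [IsLocalRing D] [IsLocalRing T] [Algebra A D]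
    [Algebra S T] (hST : maximalIdeal T = (maximalIdeal S).map (algebraMap S T)) {σ : A →+* S}
    (hσ : Function.Surjective σ) {π : D →+* T} (hπ : Function.Surjective π)
    (hcomm : π.comp (algebraMap A D) = (algebraMap S T).comp σ) :
    maximalIdeal D ≤ (maximalIdeal A).map (algebraMap A D) ⊔ RingHom.ker π := by
  have : IsLocalHom π := .of_surjective π hπ
  have : IsLocalHom σ := .of_surjective σ hσ
  rw [← Ideal.comap_map_of_surjective' π hπ, Ideal.map_map, hcomm, ← Ideal.map_map,
    map_maximalIdeal_of_surjective σ hσ, ← hST, maximalIdeal_comap π]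

lemma generatedByRegularSequence_ker_of_surjective_of_isSeparable {R S A B T : Type u}
    [CommRing R] [IsLocalRing R] [CommRing S] [IsLocalRing S] [Algebra R S]
    [CommRing A] [IsLocalRing A] [IsNoetherianRing A] [Algebra R A] [IsLocalHom (algebraMap R A)]
    [Algebra.EssFiniteType R A] [CommRing B] [IsNoetherianRing B] [Algebra R B] [Module.Flat R B]
    [CommRing T] [IsLocalRing T] [Algebra R T] [IsLocalHom (algebraMap R T)] [Algebra S T]
    [IsScalarTower R S T] [Module.Flat S T] [IsLocalHom (algebraMap S T)]
    (hST : maximalIdeal T = (maximalIdeal S).map (algebraMap S T)) {n : ℕ}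
    [Algebra (MvPolynomial (Fin n) R) A]
    [IsScalarTower R (MvPolynomial (Fin n) R) A] (M : Submonoid (MvPolynomial (Fin n) R))
    [IsLocalization M A]
    (hsep : IsSeparableFieldExtension (ResidueField R) (ResidueField A))
    {f : B →ₐ[R] T} (hf : Function.Surjective f)
    (hreg : IsRegularLocal (B ⧸ (maximalIdeal R).map (algebraMap R B)))
    (hker : GeneratedByRegularSequence B (RingHom.ker f)) {σ : A →ₐ[R] S}
    (hσ : Function.Surjective σ) :
    GeneratedByRegularSequence A (RingHom.ker σ) := by
  have : IsLocalHom σ.toRingHom := .of_surjective σ.toRingHom hσ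
  let g : A →ₐ[R] T := (IsScalarTower.toAlgHom R S T).comp σ
  have : IsLocalHom g := ⟨(RingHom.isLocalHom_comp (algebraMap S T) σ.toRingHom).map_nonunit⟩
  let μ := Algebra.TensorProduct.productMap f g
  let q := (maximalIdeal T).comap μ
  have hunit (y : q.primeCompl) : IsUnit (μ y) := not_not.1 y.2
  let D' := Localization.AtPrime q
  let π : D' →+* T := IsLocalization.lift hunit
  have hπμ (d) : π (algebraMap _ D' d) = μ d := IsLocalization.lift_eq hunit d
  obtain ⟨hπ, hkerπ⟩ :=
    surjective_and_generatedByRegularSequence_ker_of_productMap M hf hker g hπμ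
  have := isNoetherianRing_tensorProduct_of_essFiniteType R A B
  have : IsNoetherianRing D' := IsLocalization.isNoetherianRing q.primeCompl D' inferInstance
  let : Algebra A D' := ((algebraMap (B ⊗[R] A) D').comp
    (Algebra.TensorProduct.includeRight : A →ₐ[R] B ⊗[R] A).toRingHom).toAlgebra
  have hcomm : π.comp (algebraMap A D') = (algebraMap S T).comp σ.toRingHom :=
    RingHom.ext fun a ↦ (hπμ _).trans (by simp [μ, g])
  have : IsLocalHom (π.comp (algebraMap A D')) := hcomm ▸ RingHom.isLocalHom_comp _ _
  have : IsLocalHom (algebraMap A D') := isLocalHom_of_comp _ π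
  have : Module.Flat A D' := RingHom.flat_algebraMap_iff.1 <| (flat_includeRight R A B).comp <|
    RingHom.flat_algebraMap_iff.2 (IsLocalization.flat D' q.primeCompl)
  refine generatedByRegularSequence_ker_of_flat hσ hπ (fun a ↦ congr($hcomm a))
    (maximalIdeal_le_map_sup_ker hST hσ hπ hcomm) hkerπ ?_
  have := generatedByRegularSequence_closedFibre_of_isSeparable hsep hf g hreg (D' := D') rfl
  rwa [Ideal.map_map] at this

theorem generatedByRegularSequence_ker_of_isCIAt {R S A : Type u} [CommRing R] [IsLocalRing R]
    [CommRing S] [IsLocalRing S] [IsNoetherianRing S] [Algebra R S] [IsLocalHom (algebraMap R S)]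
    [CommRing A] [IsLocalRing A] [IsNoetherianRing A] [Algebra R A] [Algebra.EssFiniteType R A]
    {n : ℕ} [Algebra (MvPolynomial (Fin n) R) A]
    [IsScalarTower R (MvPolynomial (Fin n) R) A] (M : Submonoid (MvPolynomial (Fin n) R))
    [IsLocalization M A] (hci : IsCIAt R S (algebraMap R S) (maximalIdeal S))
    (hsep : IsSeparableFieldExtension (ResidueField R) (ResidueField S)) {σ : A →ₐ[R] S}
    (hσ : Function.Surjective σ) :
    GeneratedByRegularSequence A (RingHom.ker σ) := by
  obtain ⟨B, _, ρ, f, ⟨hcomp, _, -, ⟨-, hflat, hreg⟩, hf, -⟩, hker⟩ := hci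
  let := ρ.toAlgebra
  have : Module.Flat R B := hflat
  let T := AdicCompletion (maximalIdeal S) S
  have hST : maximalIdeal T = (maximalIdeal S).map (algebraMap S T) :=
    AdicCompletion.maximalIdeal_eq_map
  have : IsLocalHom (algebraMap S T) := ((local_hom_TFAE _).out 0 2).2 hST.ge
  have : IsLocalHom (algebraMap R T) :=
    inferInstanceAs (IsLocalHom ((algebraMap S T).comp (algebraMap R S)))
  have : IsLocalHom (σ.toRingHom.comp (algebraMap R A)) := by
    rwa [AlgHom.toRingHom_eq_coe, AlgHom.comp_algebraMap]
  have : IsLocalHom (algebraMap R A) := isLocalHom_of_comp _ σ.toRingHom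
  have : IsLocalHom σ := ⟨(IsLocalHom.of_surjective σ.toRingHom hσ).map_nonunit⟩
  let f' : B →ₐ[R] T := ⟨f, fun r ↦ congr($hcomp r)⟩
  exact generatedByRegularSequence_ker_of_surjective_of_isSeparable hST M
    (isSeparableFieldExtension_of_algHom (ResidueField.mapAlgHom' σ) hsep) (f := f') hf hreg hker hσ

end Presentations

/-! ### Base change of weakly regular homomorphisms -/

section WeaklyRegularBaseChange

open RingTheory.Sequence

lemma isRadical_map_maximalIdeal_of_isSeparable {k C ℓ : Type u} [Field k] [CommRing C]
    [IsLocalRing C] [Algebra k C] [Field ℓ] [Algebra k ℓ] (hsep : IsSeparableFieldExtension k ℓ) :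
    ((maximalIdeal C).map (algebraMap C (C ⊗[k] ℓ))).IsRadical ∧
      (maximalIdeal C).map (algebraMap C (C ⊗[k] ℓ)) ≠ ⊤ := by
  have hred : IsReduced (ResidueField C ⊗[k] ℓ) := hsep _ _ _
  let f := Algebra.TensorProduct.map (IsScalarTower.toAlgHom k C (ResidueField C)) (AlgHom.id k ℓ)
  have hker : (maximalIdeal C).map (algebraMap C (C ⊗[k] ℓ)) = RingHom.ker f := by
    have hres : RingHom.ker (IsScalarTower.toAlgHom k C (ResidueField C)) = maximalIdeal C :=
      Ideal.mk_ker
    rw [Algebra.TensorProduct.rTensor_ker _ residue_surjective, hres]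
    rfl
  rw [hker]
  exact ⟨(RingHom.ker_isRadical_iff_reduced_of_surjective (f := f.toRingHom)
    (Algebra.TensorProduct.map_surjective _ _ residue_surjective Function.surjective_id)).2 hred,
    RingHom.ker_ne_top f.toRingHom⟩

lemma map_eq_maximalIdeal_of_mem_minimalPrimes {Z E : Type*} [CommRing Z] [CommRing E]
    [IsLocalRing E] [Algebra Z E] {I p : Ideal Z} [p.IsPrime] [IsLocalization.AtPrime E p]
    (hI : I.IsRadical) (hp : p ∈ I.minimalPrimes) : I.map (algebraMap Z E) = maximalIdeal E := by
  rw [← IsLocalization.AtPrime.map_eq_maximalIdeal p E,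
    ← IsLocalization.AtPrime.radical_map_of_mem_minimalPrimes E p I hp,
    ← IsLocalization.map_radical p.primeCompl, hI.radical]

lemma generatedByRegularSequence_maximalIdeal_of_flat {A B : Type*} [CommRing A] [CommRing B]
    [IsLocalRing A] [IsLocalRing B] [Algebra A B] [Module.Flat A B]
    (hmax : (maximalIdeal A).map (algebraMap A B) = maximalIdeal B)
    (hA : GeneratedByRegularSequence A (maximalIdeal A)) :
    GeneratedByRegularSequence B (maximalIdeal B) := by
  obtain ⟨l, hl, hspan⟩ := hA
  have hspan' : Ideal.ofList (l.map (algebraMap A B)) = maximalIdeal B := by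
    rw [← Ideal.map_ofList, ← hmax]
    exact congrArg _ hspan
  refine ⟨_, isRegular_iff_ofList_ne_top.2 ⟨hl.1.of_flat, ?_⟩, hspan'⟩
  exact hspan' ▸ (maximalIdeal.isMaximal B).ne_top

lemma generatedByRegularSequence_maximalIdeal_of_mem_minimalPrimes {k C ℓ E : Type u} [Field k]
    [CommRing C] [IsLocalRing C] [Algebra k C] [Field ℓ] [Algebra k ℓ]
    (hsep : IsSeparableFieldExtension k ℓ) (hC : GeneratedByRegularSequence C (maximalIdeal C))
    {p : Ideal (C ⊗[k] ℓ)} [p.IsPrime]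
    (hp : p ∈ ((maximalIdeal C).map (algebraMap C (C ⊗[k] ℓ))).minimalPrimes)
    [CommRing E] [IsLocalRing E] [Algebra (C ⊗[k] ℓ) E] [IsLocalization.AtPrime E p] :
    GeneratedByRegularSequence E (maximalIdeal E) := by
  let : Algebra C E := ((algebraMap (C ⊗[k] ℓ) E).comp (algebraMap C _)).toAlgebra
  have : IsScalarTower C (C ⊗[k] ℓ) E := .of_algebraMap_eq fun _ ↦ rfl
  have : Module.Flat (C ⊗[k] ℓ) E := IsLocalization.flat E p.primeCompl
  have : Module.Flat C E := .trans C (C ⊗[k] ℓ) E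
  refine generatedByRegularSequence_maximalIdeal_of_flat ?_ hC
  rw [IsScalarTower.algebraMap_eq C (C ⊗[k] ℓ) E, ← Ideal.map_map,
    map_eq_maximalIdeal_of_mem_minimalPrimes (isRadical_map_maximalIdeal_of_isSeparable hsep).1 hp]

variable {R S R' : Type u} [CommRing R] [IsLocalRing R] [CommRing S] [IsLocalRing S]
  [CommRing R'] [Algebra R S] [Algebra R R'] [IsLocalHom (algebraMap R S)]

lemma comap_includeRight_comap_tensorToClosedFibre (p : Ideal ((R' ⧸ (maximalIdeal R).map
      (algebraMap R R')) ⊗[ResidueField R] ResidueField S)) [p.IsPrime] :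
    (p.comap (tensorToClosedFibre R R' S)).comap
      (Algebra.TensorProduct.includeRight : S →ₐ[R] R' ⊗[R] S) = maximalIdeal S := by
  refine ((maximalIdeal.isMaximal S).eq_of_le (Ideal.IsPrime.ne_top inferInstance) ?_).symm
  rw [← Ideal.map_le_iff_le_comap]
  exact (ker_tensorToClosedFibre R R' S).ge.trans (Ideal.ker_le_comap _)

/- The prime is the preimage of a prime `p` which is minimal over the maximal ideal of the closed
fibre of `R → R'`, extended to its tensor product with the residue field of `S`. By separability
this extended ideal is radical, so it becomes the maximal ideal after localizing at `p`, where it is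
still generated by a regular sequence. -/
theorem exists_isPrime_isWeaklyRegularHom_of_isSeparable [Module.Flat R R'] [IsNoetherianRing R']
    [Algebra.EssFiniteType R S]
    (hsep : IsSeparableFieldExtension (ResidueField R) (ResidueField S))
    (hreg : IsRegularLocal (R' ⧸ (maximalIdeal R).map (algebraMap R R'))) :
    ∃ (q : Ideal (R' ⊗[R] S)) (_ : q.IsPrime), IsWeaklyRegularHom S (Localization.AtPrime q)
      ((algebraMap (R' ⊗[R] S) _).comp
        (Algebra.TensorProduct.includeRight : S →ₐ[R] R' ⊗[R] S).toRingHom) := by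
  obtain ⟨-, _, hC⟩ := hreg
  obtain ⟨p, hp⟩ := Ideal.nonempty_minimalPrimes
    (isRadical_map_maximalIdeal_of_isSeparable hsep
      (C := R' ⧸ (maximalIdeal R).map (algebraMap R R'))).2
  have := hp.1.1
  set q := p.comap (tensorToClosedFibre R R' S)
  let D' := Localization.AtPrime q
  have hloc : IsLocalHom ((algebraMap (R' ⊗[R] S) D').comp
      (Algebra.TensorProduct.includeRight : S →ₐ[R] R' ⊗[R] S).toRingHom) := by
    refine ((local_hom_TFAE _).out 0 4).2 ?_
    have hq : (maximalIdeal D').comap (algebraMap _ D') = q :=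
      IsLocalization.AtPrime.under_maximalIdeal D' q
    rw [← Ideal.comap_comap, hq]
    exact comap_includeRight_comap_tensorToClosedFibre p
  have hflat : (algebraMap (R' ⊗[R] S) D').Flat :=
    RingHom.flat_algebraMap_iff.2 (IsLocalization.flat D' q.primeCompl)
  refine ⟨q, inferInstance, hloc, (flat_includeRight R S R').comp hflat, ?_⟩
  have := isNoetherianRing_tensorProduct_of_essFiniteType R S R'
  have : IsNoetherianRing D' := IsLocalization.isNoetherianRing q.primeCompl D' inferInstance
  obtain ⟨_, hE, -⟩ := exists_algebra_isLocalization_atPrime_quotient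
    (tensorToClosedFibre_surjective R R' S) p (D' := D')
  rw [← Ideal.map_map, ← ker_tensorToClosedFibre]
  have := IsLocalization.AtPrime.isLocalRing (D' ⧸ (RingHom.ker
    (tensorToClosedFibre R R' S)).map (algebraMap _ D')) p
  exact ⟨inferInstance, this,
    generatedByRegularSequence_maximalIdeal_of_mem_minimalPrimes hsep hC hp⟩

end WeaklyRegularBaseChange

/-! ### Ascent of quasi-deformations -/

section QuasiDeformationAscent

open RingTheory.Sequence MvPolynomial

lemma exists_algHom_localization_atPrime_surjective {P S : Type*} [CommRing P] [CommRing S]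
    [IsLocalRing S] [Algebra P S]
    (hfrac : ∀ s : S, ∃ f h : P,
      IsUnit (algebraMap P S h) ∧ s * algebraMap P S h = algebraMap P S f) :
    ∃ σ : Localization.AtPrime ((maximalIdeal S).comap (algebraMap P S)) →ₐ[P] S,
      Function.Surjective σ := by
  have hunit (y : ((maximalIdeal S).comap (algebraMap P S)).primeCompl) :
      IsUnit (Algebra.ofId P S y) := not_not.1 y.2
  refine ⟨IsLocalization.liftAlgHom hunit, fun s ↦ ?_⟩
  obtain ⟨f, h, hh, hs⟩ := hfrac s
  have hmem : h ∈ ((maximalIdeal S).comap (algebraMap P S)).primeCompl := not_not.2 hh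
  refine ⟨IsLocalization.mk' _ f ⟨h, hmem⟩, ?_⟩
  exact (IsLocalization.lift_mk'_spec _ _ _ _).2 (by rw [mul_comm]; exact hs.symm)

lemma exists_isWeaklyRegular_ofList_eq_ker_map {Q R' : Type*} [CommRing Q] [CommRing R'] (n : ℕ)
    {g : Q →+* R'} (hker : GeneratedByRegularSequence Q (RingHom.ker g)) :
    ∃ l, IsWeaklyRegular (MvPolynomial (Fin n) Q) l ∧
      Ideal.ofList l = RingHom.ker (map (σ := Fin n) g) := by
  obtain ⟨l, hl, hspan⟩ := hker
  refine ⟨l.map (algebraMap Q _), hl.1.of_flat, ?_⟩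
  rw [← Ideal.map_ofList, ker_map, ← hspan]
  rfl

lemma exists_isWeaklyRegular_ofList_eq_ker_tensorProduct_map {R A S B : Type*} [CommRing R]
    [CommRing A] [CommRing S] [CommRing B] [Algebra R A] [Algebra R S] [Algebra R B]
    [Module.Flat R B] {σ : A →ₐ[R] S} (hσ : Function.Surjective σ)
    (hker : GeneratedByRegularSequence A (RingHom.ker σ)) :
    ∃ l, IsWeaklyRegular (B ⊗[R] A) l ∧
      Ideal.ofList l = RingHom.ker (Algebra.TensorProduct.map (AlgHom.id B B) σ) := by
  obtain ⟨l, hl, hspan⟩ := hker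
  let := (Algebra.TensorProduct.includeRight : A →ₐ[R] B ⊗[R] A).toRingHom.toAlgebra
  have : Module.Flat A (B ⊗[R] A) := flat_includeRight R A B
  refine ⟨l.map (algebraMap A _), hl.1.of_flat, ?_⟩
  refine .trans ?_ (Algebra.TensorProduct.lTensor_ker σ hσ).symm
  rw [← Ideal.map_ofList, ← hspan]
  rfl

variable {R S A R' Q S' : Type*} [CommRing R] [CommRing S] [CommRing A] [CommRing R'] [CommRing Q]
  [CommRing S'] [Algebra R S] [Algebra R A] [Algebra R R'] {n : ℕ}
  [Algebra (MvPolynomial (Fin n) R) A] [Algebra (MvPolynomial (Fin n) R) S]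
  [IsScalarTower R (MvPolynomial (Fin n) R) A] [IsScalarTower R (MvPolynomial (Fin n) R) S]

lemma tensorProduct_map_comp_tensorAeval (σ : A →ₐ[MvPolynomial (Fin n) R] S) :
    (Algebra.TensorProduct.map (AlgHom.id R' R') (σ.restrictScalars R)).comp
      (tensorAeval (R := R) A R' (n := n)) = tensorAeval S R' (n := n) :=
  algHom_ext fun i ↦ by simp [tensorAeval]

variable (R S n) in
/-- The homomorphism `Q[X₁, …, Xₙ] → R' ⊗[R] S` obtained from `tensorAeval` by changing the
coefficients along `g : Q → R'`. For a quasi-deformation `R → R' ← Q`, localizing it gives the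
surjection in a quasi-deformation of `S`. -/
noncomputable def mapTensorAeval (g : Q →+* R') : MvPolynomial (Fin n) Q →+* R' ⊗[R] S :=
  (tensorAeval S R').toRingHom.comp (map g)

theorem exists_surjective_generatedByRegularSequence_ker_mapTensorAeval [Module.Flat R R']
    (M : Submonoid (MvPolynomial (Fin n) R)) [IsLocalization M A] {g : Q →+* R'}
    (hg : Function.Surjective g) (hker : GeneratedByRegularSequence Q (RingHom.ker g))
    {σ : A →ₐ[MvPolynomial (Fin n) R] S} (hσ : Function.Surjective σ)
    (hkerσ : GeneratedByRegularSequence A (RingHom.ker σ)) (q : Ideal (R' ⊗[R] S)) [q.IsPrime]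
    [Algebra (R' ⊗[R] S) S'] [IsLocalization.AtPrime S' q] {Q' : Type*} [CommRing Q']
    [Algebra (MvPolynomial (Fin n) Q) Q']
    [IsLocalization.AtPrime Q' (q.comap (mapTensorAeval R S n g))] :
    ∃ γ : Q' →+* S', (∀ p, γ (algebraMap _ Q' p) = algebraMap _ S' (mapTensorAeval R S n g p)) ∧
      Function.Surjective γ ∧ GeneratedByRegularSequence Q' (RingHom.ker γ) := by
  let τ := Algebra.TensorProduct.map (AlgHom.id R' R') (σ.restrictScalars R)
  let χ : MvPolynomial (Fin n) R' →ₐ[R'] R' ⊗[R] A := tensorAeval A R'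
  have hτ : Function.Surjective τ :=
    Algebra.TensorProduct.map_surjective _ _ Function.surjective_id hσ
  have hcomp : τ.comp χ = tensorAeval S R' := tensorProduct_map_comp_tensorAeval σ
  let A' := Localization.AtPrime (q.comap τ.toRingHom)
  let : Algebra (MvPolynomial (Fin n) R') A' := ((algebraMap _ A').comp χ.toRingHom).toAlgebra
  have : IsLocalization.AtPrime A' ((q.comap τ.toRingHom).comap χ) :=
    isLocalization_atPrime_comap_tensorAeval A R' M _ A'
  have hq : ((q.comap τ.toRingHom).comap χ).comap (map g) = q.comap (mapTensorAeval R S n g) := by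
    rw [mapTensorAeval, ← hcomp]
    rfl
  have : IsLocalization.AtPrime Q'
      (((q.comap τ.toRingHom).comap χ).comap (map (σ := Fin n) g)) := by
    simpa only [hq]
  obtain ⟨l, hl, hlker⟩ := exists_isWeaklyRegular_ofList_eq_ker_map n hker
  obtain ⟨β, hβ, hβs, hβker⟩ := exists_surjective_generatedByRegularSequence_ker Q' A'
    (map_surjective g hg) ((q.comap τ.toRingHom).comap χ) hl hlker
  obtain ⟨l', hl', hlker'⟩ := exists_isWeaklyRegular_ofList_eq_ker_tensorProduct_map (B := R')
    (σ := σ.restrictScalars R) hσ hkerσ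
  obtain ⟨γ, hγ, hγs, hγker⟩ := exists_surjective_generatedByRegularSequence_ker A' S'
    (g := τ.toRingHom) hτ q hl' hlker'
  refine ⟨γ.comp β, fun p ↦ ?_, hγs.comp hβs, generatedByRegularSequence_ker_comp hβs hβker hγker⟩
  rw [RingHom.comp_apply, hβ, mapTensorAeval, ← hcomp]
  exact hγ _

lemma exists_isUnit_mapTensorAeval_mul_eq (M : Submonoid (MvPolynomial (Fin n) R))
    [IsLocalization M A] {g : Q →+* R'} (hg : Function.Surjective g)
    {σ : A →ₐ[MvPolynomial (Fin n) R] S} (hσ : Function.Surjective σ) (d : R' ⊗[R] S) :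
    ∃ h a, IsUnit (mapTensorAeval R S n g h) ∧
      mapTensorAeval R S n g h * d = mapTensorAeval R S n g a := by
  let τ := Algebra.TensorProduct.map (AlgHom.id R' R') (σ.restrictScalars R)
  have hτs : Function.Surjective τ :=
    Algebra.TensorProduct.map_surjective _ _ Function.surjective_id hσ
  obtain ⟨z, rfl⟩ := hτs d
  let := (tensorAeval (R := R) A R' (n := n)).toAlgebra
  have := isLocalization_tensorAeval A R' M
  obtain ⟨⟨p, m⟩, hz⟩ := IsLocalization.surj (M.map (map (algebraMap R R'))) z
  have hτ (p) : τ (algebraMap _ _ p) = tensorAeval S R' p :=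
    DFunLike.congr_fun (tensorProduct_map_comp_tensorAeval σ) p
  obtain ⟨h, hh⟩ := map_surjective g hg m.1
  obtain ⟨a, ha⟩ := map_surjective g hg p
  have hχ (y) : mapTensorAeval R S n g y = τ (algebraMap _ _ (map g y)) := (hτ _).symm
  refine ⟨h, a, ?_, ?_⟩
  · rw [hχ, hh]
    exact (IsLocalization.map_units (R' ⊗[R] A) m).map τ
  · rw [hχ, hχ, hh, ha, ← hz, map_mul, mul_comm]

end QuasiDeformationAscent

section FlatDimensionAscent

open MvPolynomial

lemma isLocalizedModule_restrictScalars_of_exists_isUnit {P D N W : Type*} [CommRing P] [CommRing D]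
    [Algebra P D] [AddCommGroup N] [AddCommGroup W] [Module D N] [Module D W] [Module P N]
    [Module P W] [IsScalarTower P D N] [IsScalarTower P D W]
    (hfrac : ∀ d : D, ∃ h a : P,
      IsUnit (algebraMap P D h) ∧ algebraMap P D h * d = algebraMap P D a)
    (q : Ideal D) [q.IsPrime] (f : N →ₗ[D] W) [IsLocalizedModule q.primeCompl f] :
    IsLocalizedModule (q.comap (algebraMap P D)).primeCompl (f.restrictScalars P) := by
  have hmem {t : D} (ht : t ∈ q.primeCompl) : ∃ h a : P, algebraMap P D h * t = algebraMap P D a ∧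
      a ∈ (q.comap (algebraMap P D)).primeCompl := by
    obtain ⟨h, a, hu, e⟩ := hfrac t
    refine ⟨h, a, e, fun ha ↦ ht ?_⟩
    exact (q.unit_mul_mem_iff_mem hu).1 (e ▸ ha)
  refine ⟨fun a ↦ ?_, fun w ↦ ?_, fun {y z} hyz ↦ ?_⟩
  · have := IsLocalizedModule.map_units f (⟨algebraMap P D a, a.2⟩ : q.primeCompl)
    rw [Module.End.isUnit_iff] at this ⊢
    convert this using 1
    exact funext fun w ↦ (algebraMap_smul D (a : P) w).symm
  · obtain ⟨⟨y, t⟩, hy⟩ := IsLocalizedModule.surj q.primeCompl f w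
    obtain ⟨h, a, e, ha⟩ := hmem t.2
    refine ⟨⟨h • y, a, ha⟩, ?_⟩
    change a • w = f (h • y)
    rw [← algebraMap_smul D a, ← e, mul_smul, ← algebraMap_smul D h, map_smul, ← hy]
    rfl
  · obtain ⟨t, ht⟩ := IsLocalizedModule.exists_of_eq (S := q.primeCompl) (f := f) hyz
    obtain ⟨h, a, e, ha⟩ := hmem t.2
    refine ⟨⟨a, ha⟩, ?_⟩
    change a • y = a • z
    rw [← algebraMap_smul D a, ← algebraMap_smul D a z, ← e, mul_smul, mul_smul]
    exact congrArg _ ht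

lemma FlatDimLE.of_isLocalizedModule_of_exists_isUnit {P D N W Q' : Type u} [CommRing P]
    [CommRing D] [AddCommGroup N] [AddCommGroup W] [Module D N] [Module D W] {χ : P →+* D}
    (hfrac : ∀ d, ∃ h a, IsUnit (χ h) ∧ χ h * d = χ a) (q : Ideal D) [q.IsPrime] (f : N →ₗ[D] W)
    [IsLocalizedModule q.primeCompl f] [CommRing Q'] [Algebra P Q']
    [IsLocalization.AtPrime Q' (q.comap χ)] [Module Q' W]
    (hW : ∀ p (w : W), algebraMap P Q' p • w = χ p • w) {n : ℕ}
    (h : letI : Module P N := Module.compHom N χ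
      FlatDimLE P n N) : FlatDimLE Q' n W := by
  let : Algebra P D := χ.toAlgebra
  let : Module P N := Module.compHom N χ
  let : Module P W := Module.compHom W χ
  have : IsScalarTower P D N := .of_algebraMap_smul fun _ _ ↦ rfl
  have : IsScalarTower P D W := .of_algebraMap_smul fun _ _ ↦ rfl
  have : IsScalarTower P Q' W := .of_algebraMap_smul hW
  have hf := isLocalizedModule_restrictScalars_of_exists_isUnit hfrac q f
  have : Module.Flat P Q' := IsLocalization.flat Q' (q.comap χ).primeCompl
  exact h.of_isBaseChange ((isLocalizedModule_iff_isBaseChange _ Q' (f.restrictScalars P)).1 hf)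

attribute [local instance] Algebra.TensorProduct.rightAlgebra

variable {R S M R' Q S' : Type u} [CommRing R] [CommRing S] [CommRing R'] [CommRing Q]
  [CommRing S'] [Algebra R S] [Algebra R R'] {n : ℕ} [Algebra (MvPolynomial (Fin n) R) S]
  [AddCommGroup M] [Module R M] [Module S M]
  [IsScalarTower R S M] {g : Q →+* R'}

lemma flatDimLE_mapTensorAeval {a : ℕ} (h : letI : Module Q (R' ⊗[R] M) := Module.compHom _ g
      FlatDimLE Q a (R' ⊗[R] M)) :
    letI : Module (MvPolynomial (Fin n) Q) ((R' ⊗[R] S) ⊗[S] M) :=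
      Module.compHom _ (mapTensorAeval R S n g)
    FlatDimLE (MvPolynomial (Fin n) Q) (a + n) ((R' ⊗[R] S) ⊗[S] M) := by
  let e : (R' ⊗[R] S) ⊗[S] M ≃ₗ[R'] R' ⊗[R] M :=
    Algebra.IsPushout.cancelBaseChange R R' S (R' ⊗[R] S) M
  let : Module Q (R' ⊗[R] M) := Module.compHom _ g
  let : Module Q ((R' ⊗[R] S) ⊗[S] M) := Module.compHom _ g
  let : Module (MvPolynomial (Fin n) Q) ((R' ⊗[R] S) ⊗[S] M) :=
    Module.compHom _ (mapTensorAeval R S n g)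
  have : IsScalarTower Q (MvPolynomial (Fin n) Q) ((R' ⊗[R] S) ⊗[S] M) :=
    .of_algebraMap_smul fun c y ↦ by
      change mapTensorAeval R S n g (C c) • y = g c • y
      have hC : mapTensorAeval R S n g (C c) = algebraMap R' _ (g c) := by simp [mapTensorAeval]
      rw [hC, algebraMap_smul]
  have h' : FlatDimLE Q a ((R' ⊗[R] S) ⊗[S] M) :=
    h.congr { e.symm with map_smul' := fun c y ↦ e.symm.map_smul (g c) y }
  exact h'.mvPolynomial

lemma isBaseChange_rTensor_algebraMap {S D S' M : Type*} [CommRing S] [CommRing D] [CommRing S']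
    [Algebra S D] [Algebra D S'] [Algebra S S'] [IsScalarTower S D S'] [AddCommGroup M]
    [Module S M] :
    IsBaseChange S' (TensorProduct.AlgebraTensorModule.rTensor S M (Algebra.linearMap D S')) := by
  refine .of_comp (TensorProduct.isBaseChange S M D) ?_
  convert TensorProduct.isBaseChange S M S' using 1
  ext m
  simp

theorem flatDimFinite_localization_mapTensorAeval [Algebra (R' ⊗[R] S) S']
    (q : Ideal (R' ⊗[R] S)) [q.IsPrime] [IsLocalization.AtPrime S' q]
    (hfrac : ∀ d, ∃ h a, IsUnit (mapTensorAeval R S n g h) ∧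
      mapTensorAeval R S n g h * d = mapTensorAeval R S n g a)
    {Q' : Type u} [CommRing Q'] [Algebra (MvPolynomial (Fin n) Q) Q']
    [IsLocalization.AtPrime Q' (q.comap (mapTensorAeval R S n g))] {γ : Q' →+* S'}
    (hγ : ∀ p, γ (algebraMap _ Q' p) = algebraMap _ S' (mapTensorAeval R S n g p))
    (h : letI : Module Q (R' ⊗[R] M) := Module.compHom _ g
      FlatDimFinite Q (R' ⊗[R] M)) :
    letI : Algebra S S' := ((algebraMap _ S').comp
      (Algebra.TensorProduct.includeRight : S →ₐ[R] R' ⊗[R] S).toRingHom).toAlgebra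
    letI : Module Q' (S' ⊗[S] M) := Module.compHom _ γ
    FlatDimFinite Q' (S' ⊗[S] M) := by
  obtain ⟨a, ha⟩ := h
  let : Algebra S S' := ((algebraMap _ S').comp
    (Algebra.TensorProduct.includeRight : S →ₐ[R] R' ⊗[R] S).toRingHom).toAlgebra
  have : IsScalarTower S (R' ⊗[R] S) S' := .of_algebraMap_eq fun _ ↦ rfl
  let : Module Q' (S' ⊗[S] M) := Module.compHom _ γ
  let f := TensorProduct.AlgebraTensorModule.rTensor S M (Algebra.linearMap (R' ⊗[R] S) S')
  have : IsLocalizedModule q.primeCompl f :=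
    (isLocalizedModule_iff_isBaseChange q.primeCompl S' f).2 isBaseChange_rTensor_algebraMap
  have hsmul (p : MvPolynomial (Fin n) Q) (w : S' ⊗[S] M) :
      algebraMap _ Q' p • w = mapTensorAeval R S n g p • w :=
    (congrArg (· • w) (hγ p)).trans (algebraMap_smul S' _ w)
  have h' := flatDimLE_mapTensorAeval (S := S) (n := n) ha
  exact ⟨a + n, h'.of_isLocalizedModule_of_exists_isUnit hfrac q f hsmul⟩

end FlatDimensionAscent

section MainTheorem

open MvPolynomial

lemma exists_localization_atPrime_surjective_generatedByRegularSequence_ker {R S : Type u}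
    [CommRing R] [CommRing S] [IsLocalRing R] [IsLocalRing S] [IsNoetherianRing R] [Algebra R S]
    [IsLocalHom (algebraMap R S)] [Algebra.EssFiniteType R S]
    (hci : IsCIAt R S (algebraMap R S) (maximalIdeal S))
    (hsep : IsSeparableFieldExtension (ResidueField R) (ResidueField S)) :
    ∃ (n : ℕ) (_ : Algebra (MvPolynomial (Fin n) R) S)
      (_ : IsScalarTower R (MvPolynomial (Fin n) R) S) (p : Ideal (MvPolynomial (Fin n) R))
      (_ : p.IsPrime) (σ : Localization.AtPrime p →ₐ[MvPolynomial (Fin n) R] S),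
      Function.Surjective σ ∧ GeneratedByRegularSequence _ (RingHom.ker σ) := by
  obtain ⟨n, x, hx⟩ := exists_isUnit_aeval_mul_eq_aeval R S
  let : Algebra (MvPolynomial (Fin n) R) S := (aeval x).toAlgebra
  have : IsScalarTower R (MvPolynomial (Fin n) R) S := .of_algebraMap_eq fun r ↦ (aeval_C x r).symm
  obtain ⟨σ, hσ⟩ := exists_algHom_localization_atPrime_surjective (P := MvPolynomial (Fin n) R) hx
  let p := (maximalIdeal S).comap (algebraMap (MvPolynomial (Fin n) R) S)
  have : IsNoetherianRing S := Algebra.EssFiniteType.isNoetherianRing R S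
  have : IsNoetherianRing (Localization.AtPrime p) :=
    IsLocalization.isNoetherianRing p.primeCompl _ inferInstance
  have : Algebra.EssFiniteType R (Localization.AtPrime p) :=
    have := Algebra.EssFiniteType.of_isLocalization (Localization.AtPrime p) p.primeCompl
    .comp R (MvPolynomial (Fin n) R) _
  exact ⟨n, _, ‹_›, p, inferInstance, σ, hσ,
    generatedByRegularSequence_ker_of_isCIAt p.primeCompl hci hsep (σ := σ.restrictScalars R) hσ⟩

theorem ascent_upperCIfd_of_flat_eft_ci_separable_general (R S M : Type u) [CommRing R]
    [CommRing S] [IsLocalRing R] [IsLocalRing S] [IsNoetherianRing R] [Algebra R S]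
    [IsLocalHom (algebraMap R S)] [AddCommGroup M] [Module R M] [Module S M] [IsScalarTower R S M]
    [Algebra.EssFiniteType R S] (hci : IsCIAt R S (algebraMap R S) (maximalIdeal S))
    (hsep : IsSeparableFieldExtension (ResidueField R) (ResidueField S))
    (hfd : HasFiniteUpperCIDim R M) :
    HasFiniteUpperCIDim S M := by
  obtain ⟨R', Q, _, _, f, g, ⟨_, _, _, _, _, _, hflat, hg, hker⟩, ⟨-, -, hreg⟩, hfd, -⟩ := hfd
  let : Algebra R R' := f.toAlgebra
  have : Module.Flat R R' := hflat
  obtain ⟨n, _, _, p, _, σ, hσ, hkerσ⟩ :=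
    exists_localization_atPrime_surjective_generatedByRegularSequence_ker hci hsep
  obtain ⟨q, _, hweak⟩ := exists_isPrime_isWeaklyRegularHom_of_isSeparable hsep hreg
  let S' := Localization.AtPrime q
  let qQ := q.comap (mapTensorAeval R S n g)
  let Q' := Localization.AtPrime qQ
  obtain ⟨γ, hγ, hγs, hγker⟩ := exists_surjective_generatedByRegularSequence_ker_mapTensorAeval
    (Q' := Q') (S' := S') p.primeCompl hg hker hσ hkerσ q
  have : IsNoetherianRing Q' := IsLocalization.isNoetherianRing qQ.primeCompl Q' inferInstance
  have : IsNoetherianRing S' := isNoetherianRing_of_surjective _ _ γ hγs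
  let : Algebra Q' S' := γ.toAlgebra
  have hdeform : IsQuasiDeformation S S' Q' _ γ := ⟨inferInstance, inferInstance, ‹_›, ‹_›,
    hweak.1, .of_surjective _ hγs, hweak.2.1, hγs, hγker⟩
  refine ⟨S', Q', _, _, _, γ, hdeform, hweak, ?_,
    projDimFinite_of_generatedByRegularSequence_ker hγs hγker⟩
  exact flatDimFinite_localization_mapTensorAeval q
    (exists_isUnit_mapTensorAeval_mul_eq p.primeCompl hg hσ) hγ hfd

end MainTheorem

/-- Ascent of complete intersection flat dimension. -/
theorem ascent_upperCIfd_of_flat_eft_ci_separable [Module.Flat R S] [Algebra.EssFiniteType R S]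
    (hci : IsCIAt R S (algebraMap R S) (maximalIdeal S))
    (hsep : letI := (IsLocalRing.ResidueField.map (algebraMap R S)).toAlgebra;
      IsSeparableFieldExtension (ResidueField R) (ResidueField S))
    (hfd : HasFiniteUpperCIDim R M) :
    HasFiniteUpperCIDim S M := by
  refine ascent_upperCIfd_of_flat_eft_ci_separable_general R S M hci ?_ hfd
  convert hsep
  exact Algebra.algebra_ext _ _ fun _ ↦ rfl
end

section
/- Let φ: (R,m,k) → (S,n,ℓ) be a surjective local ring homomorphism between commutative Noetherian local rings whose kernel is generated by an R-regular sequence, and let M be a finitely generated S-module. If CI-fd_R M < ∞, then CI-dim_S M < ∞. -/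
/-!
Common definitions: André–Quillen homology via the standard (comonad/polynomial)
simplicial resolution, complete-intersection (flat) dimensions via quasi-deformations,
Cohen factorizations, Koszul homology `H₁`, and related notions.
-/

universe u

open TensorProduct IsLocalRing

variable (R S M : Type u) [CommRing R] [CommRing S]
  [IsLocalRing R] [IsLocalRing S] [IsNoetherianRing R] [IsNoetherianRing S]
  [Algebra R S] [IsLocalHom (algebraMap R S)]
  [AddCommGroup M] [Module R M] [Module S M] [IsScalarTower R S M] [Module.Finite S M]


/-!
Let `R → R' ← Q` be a quasi-deformation witnessing `CI-fd_R M < ∞` and put `S' = S ⊗_R R'`. Since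
`R → R'` is faithfully flat, so is `S → S'`, and the regular sequence generating `ker (R → S)` maps
to one generating `ker (R' → S')`. Lifted to `Q` and appended to a regular sequence generating
`ker (Q → R')`, it generates `ker (Q → S')`; so `S → S' ← Q` is again a quasi-deformation over the
same `Q`, and `pd_Q S'` is the length of a regular sequence. Finally `S' ⊗_S M ≅ R' ⊗_R M` over
`R'`, hence over `Q`, so the flat dimension over `Q` does not change.
-/

section Dimension

variable {Q N N' : Type u} [CommRing Q]
  [AddCommGroup N] [Module Q N] [AddCommGroup N'] [Module Q N']

lemma FlatDimLE.of_linearEquiv (e : N ≃ₗ[Q] N') : ∀ {n : ℕ}, FlatDimLE Q n N → FlatDimLE Q n N'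
  | 0, (_ : Module.Flat Q N) => Module.Flat.of_linearEquiv e.symm
  | _ + 1, ⟨F, _, _, f, hF, hf, hker⟩ =>
    ⟨F, _, _, e.toLinearMap ∘ₗ f, hF, e.surjective.comp hf, (e.ker_comp f).symm ▸ hker⟩

lemma FlatDimFinite.of_linearEquiv (h : FlatDimFinite Q N) (e : N ≃ₗ[Q] N') : FlatDimFinite Q N' :=
  h.imp fun _ hn => hn.of_linearEquiv e

open CategoryTheory in
lemma projDimLE_of_hasProjectiveDimensionLE (n : ℕ)
    (h : HasProjectiveDimensionLE (ModuleCat.of Q N) n) : ProjDimLE Q n N := by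
  induction n generalizing N with
  | zero =>
    rwa [← projective_iff_hasProjectiveDimensionLE_zero, ← IsProjective.iff_projective] at h
  | succ n ih =>
    have hsur := Finsupp.linearCombination_id_surjective Q N
    have hprojective : Projective (ModuleCat.of Q (N →₀ Q)) :=
      (IsProjective.iff_projective (N →₀ Q)).1 inferInstance
    exact ⟨N →₀ Q, _, _, Finsupp.linearCombination Q id, inferInstance, hsur,
      ih (((LinearMap.shortExact_shortComplexKer hsur).hasProjectiveDimensionLT_X₃_iff n
        hprojective).1 h)⟩

end Dimension

namespace GeneratedByRegularSequence

open RingTheory.Sequence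

variable {A B : Type u} [CommRing A] [CommRing B]

lemma ne_top {I : Ideal A} (hI : GeneratedByRegularSequence A I) : I ≠ ⊤ := by
  obtain ⟨rs, hrs, rfl⟩ := hI
  simpa using hrs.top_ne_smul.symm

lemma map_of_faithfullyFlat [Algebra A B] [Module.FaithfullyFlat A B] {I : Ideal A}
    (hI : GeneratedByRegularSequence A I) :
    GeneratedByRegularSequence B (I.map (algebraMap A B)) := by
  obtain ⟨rs, hrs, rfl⟩ := hI
  exact ⟨rs.map (algebraMap A B), hrs.of_faithfullyFlat,
    (Ideal.map_ofList (algebraMap A B) rs).symm⟩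

lemma comap_of_surjective [Algebra A B] (hsur : Function.Surjective (algebraMap A B))
    (hker : GeneratedByRegularSequence A (RingHom.ker (algebraMap A B))) {J : Ideal B}
    (hJ : GeneratedByRegularSequence B J) :
    GeneratedByRegularSequence A (J.comap (algebraMap A B)) := by
  have hcomap_ne_top : J.comap (algebraMap A B) ≠ ⊤ := Ideal.comap_ne_top _ hJ.ne_top
  obtain ⟨rs, hrs, hrs_ker⟩ := hker
  obtain ⟨xs, hxs, hxs_span⟩ := hJ
  change Ideal.ofList rs = _ at hrs_ker
  change Ideal.ofList xs = _ at hxs_span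
  obtain ⟨ys, rfl⟩ := List.map_surjective_iff.2 hsur xs
  have hspan : Ideal.ofList (rs ++ ys) = J.comap (algebraMap A B) := by
    rw [Ideal.ofList_append, hrs_ker, ← hxs_span, ← Ideal.map_ofList,
      Ideal.comap_map_of_surjective' _ hsur, sup_comm]
  have hrs_smul : (Ideal.ofList rs • ⊤ : Ideal A) = LinearMap.ker (Algebra.linearMap A B) := by
    rw [hrs_ker, smul_eq_mul, Ideal.mul_top]
    rfl
  let e : (A ⧸ (Ideal.ofList rs • ⊤ : Ideal A)) ≃ₗ[A] B :=
    Submodule.quotEquivOfEq _ _ hrs_smul ≪≫ₗ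
      (Algebra.linearMap A B).quotKerEquivOfSurjective hsur
  have hys : IsWeaklyRegular (A ⧸ (Ideal.ofList rs • ⊤ : Ideal A)) ys :=
    (e.isWeaklyRegular_congr ys).2
      ((isWeaklyRegular_map_algebraMap_iff B B ys).1 hxs.toIsWeaklyRegular)
  have hweak : IsWeaklyRegular A (rs ++ ys) :=
    (isWeaklyRegular_append_iff A rs ys).2 ⟨hrs.toIsWeaklyRegular, hys⟩
  exact ⟨rs ++ ys, ⟨hweak, by simpa [hspan] using hcomap_ne_top.symm⟩, hspan⟩

lemma projDimFinite_of_surjective [IsLocalRing A] [IsNoetherianRing A] [Algebra A B]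
    (hsur : Function.Surjective (algebraMap A B))
    (hker : GeneratedByRegularSequence A (RingHom.ker (algebraMap A B))) : ProjDimFinite A B := by
  obtain ⟨rs, hrs, hrs_ker⟩ := hker
  let e : (A ⧸ Ideal.ofList rs) ≃ₗ[A] B :=
    Submodule.quotEquivOfEq _ (LinearMap.ker (Algebra.linearMap A B)) hrs_ker ≪≫ₗ
      (Algebra.linearMap A B).quotKerEquivOfSurjective hsur
  refine ⟨rs.length, projDimLE_of_hasProjectiveDimensionLE _ ?_⟩
  rw [← CategoryTheory.projectiveDimension_le_iff,
    ← ModuleCat.projectiveDimension_quotient_eq_length.{u} rs hrs]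
  exact (ModuleCat.projectiveDimension_eq_of_linearEquiv (M := ModuleCat.of A B)
    (N := ModuleCat.of A (Shrink.{u} (A ⧸ Ideal.ofList rs)))
    (e.symm ≪≫ₗ (Shrink.linearEquiv A _).symm)).le

end GeneratedByRegularSequence

section Pushout

variable {A B A' B' : Type u} [CommRing A] [CommRing B] [CommRing A'] [CommRing B']
  [Algebra A B] [Algebra A A'] [Algebra A B'] [Algebra B B'] [Algebra A' B']
  [IsScalarTower A B B'] [IsScalarTower A A' B'] [Algebra.IsPushout A B A' B']

lemma ker_algebraMap_of_isPushout (hsur : Function.Surjective (algebraMap A B)) :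
    RingHom.ker (algebraMap A' B') = (RingHom.ker (algebraMap A B)).map (algebraMap A A') := by
  set J := (RingHom.ker (algebraMap A B)).map (algebraMap A A') with hJ
  apply le_antisymm
  · -- The pushout property gives a map `B' → A' ⧸ J` through which `A' → A' ⧸ J` factors.
    have hle : RingHom.ker (Algebra.ofId A B) ≤ RingHom.ker (Algebra.ofId A (A' ⧸ J)) :=
      fun a ha => Ideal.Quotient.eq_zero_iff_mem.2 (Ideal.mem_map_of_mem _ ha)
    let π : B' →ₐ[A] A' ⧸ J := Algebra.pushoutDesc B'
      (AlgHom.liftOfSurjective (Algebra.ofId A B) hsur (Algebra.ofId A (A' ⧸ J)) hle)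
      (Ideal.Quotient.mkₐ A J) fun _ _ => mul_comm _ _
    intro x hx
    have hπ : π (algebraMap A' B' x) = Ideal.Quotient.mk J x := Algebra.pushoutDesc_right ..
    rw [← Ideal.Quotient.eq_zero_iff_mem, ← hπ, hx, map_zero]
  · rw [hJ, Ideal.map_le_iff_le_comap, RingHom.comap_ker, ← IsScalarTower.algebraMap_eq]
    intro a ha
    rw [RingHom.mem_ker, IsScalarTower.algebraMap_apply A B B', ha, map_zero]

lemma GeneratedByRegularSequence.ker_of_isPushout [Module.FaithfullyFlat A A']
    (hsur : Function.Surjective (algebraMap A B))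
    (hker : GeneratedByRegularSequence A (RingHom.ker (algebraMap A B))) :
    GeneratedByRegularSequence A' (RingHom.ker (algebraMap A' B')) :=
  ker_algebraMap_of_isPushout (A' := A') (B' := B') hsur ▸ hker.map_of_faithfullyFlat

lemma IsQuasiDeformation.baseChange {Q : Type u} [CommRing Q] {g : Q →+* A'}
    (hqd : IsQuasiDeformation A A' Q (algebraMap A A') g)
    (hsur : Function.Surjective (algebraMap A B))
    (hker : GeneratedByRegularSequence A (RingHom.ker (algebraMap A B))) :
    IsQuasiDeformation B B' Q (algebraMap B B') ((algebraMap A' B').comp g) := by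
  obtain ⟨hlocalA', hlocalQ, hnoethA', hnoethQ, _, _, hflat, hg, hgker⟩ := hqd
  rw [toAlgebra_algebraMap] at hflat
  have : IsLocalRing A := (algebraMap A A').domain_isLocalRing
  have : Module.FaithfullyFlat A A' := .of_flat_of_isLocalHom
  have hpushout : Algebra.IsPushout A A' B B' := .symm inferInstance
  have : Module.FaithfullyFlat B B' := RingHom.faithfullyFlat_algebraMap_iff.1 <|
    RingHom.FaithfullyFlat.isStableUnderBaseChange A A' B B'
      (RingHom.faithfullyFlat_algebraMap_iff.2 ‹_›)
  have hsur' : Function.Surjective (algebraMap A' B') :=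
    RingHom.surjective_isStableUnderBaseChange A B A' B' hsur
  have hker' : GeneratedByRegularSequence A' (RingHom.ker (algebraMap A' B')) :=
    hker.ker_of_isPushout hsur
  have hcomp : Function.Surjective ((algebraMap A' B').comp g) := hsur'.comp hg
  have hcomp_ker : GeneratedByRegularSequence Q (RingHom.ker ((algebraMap A' B').comp g)) := by
    let := g.toAlgebra
    rw [← RingHom.comap_ker]
    exact hgker.comap_of_surjective hg hker'
  have : Nontrivial B' := not_subsingleton_iff_nontrivial.1 fun _ =>
    hker'.ne_top (RingHom.ker_eq_top_of_subsingleton _)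
  refine ⟨.of_surjective' _ hsur', hlocalQ, isNoetherianRing_of_surjective _ _ _ hsur', hnoethQ,
    inferInstance, .of_surjective _ hcomp, ?_, hcomp, hcomp_ker⟩
  rw [toAlgebra_algebraMap]
  infer_instance

lemma FlatDimFinite.tensorProduct_of_isPushout {Q N : Type u} [CommRing Q] (g : Q →+* A')
    [AddCommGroup N] [Module A N] [Module B N] [IsScalarTower A B N]
    (h : letI : Module Q (A' ⊗[A] N) := Module.compHom _ g
      FlatDimFinite Q (A' ⊗[A] N)) :
    letI : Module Q (B' ⊗[B] N) := Module.compHom _ ((algebraMap A' B').comp g)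
    FlatDimFinite Q (B' ⊗[B] N) := by
  let : Module Q (A' ⊗[A] N) := Module.compHom _ g
  let : Module Q (B' ⊗[B] N) := Module.compHom _ ((algebraMap A' B').comp g)
  have : Algebra.IsPushout A A' B B' := .symm inferInstance
  let e := (Algebra.IsPushout.cancelBaseChange A A' B B' N).symm
  exact h.of_linearEquiv
    { e with map_smul' := fun q x => (map_smul e (g q) x).trans (algebraMap_smul B' (g q) _).symm }

end Pushout

lemma IsQuasiDeformation.hasFiniteCIDim {B B' Q N : Type u} [CommRing B] [CommRing B'] [CommRing Q]
    [inst : Algebra B B'] [AddCommGroup N] [Module B N] {h : Q →+* B'}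
    (hqd : IsQuasiDeformation B B' Q (algebraMap B B') h)
    (hfd : letI : Module Q (B' ⊗[B] N) := Module.compHom _ h
      FlatDimFinite Q (B' ⊗[B] N)) :
    HasFiniteCIDim B N := by
  obtain ⟨f, rfl⟩ : ∃ f : B →+* B', inst = f.toAlgebra := ⟨_, toAlgebra_algebraMap.symm⟩
  refine ⟨B', Q, _, _, f, h, hqd, hfd, ?_⟩
  obtain ⟨_, _, _, _, _, _, _, hh, hhker⟩ := hqd
  let := h.toAlgebra
  exact hhker.projDimFinite_of_surjective hh

attribute [local instance] Algebra.TensorProduct.rightAlgebra in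
theorem ascent_CIfd_of_surjective_ci_general {A B N : Type u} [CommRing A] [CommRing B]
    [Algebra A B] [AddCommGroup N] [Module A N] [Module B N] [IsScalarTower A B N]
    (hsur : Function.Surjective (algebraMap A B))
    (hker : GeneratedByRegularSequence A (RingHom.ker (algebraMap A B)))
    (hfd : HasFiniteCIDim A N) : HasFiniteCIDim B N := by
  obtain ⟨A', Q, _, _, f, g, hqd, hflatdim, -⟩ := hfd
  let := f.toAlgebra
  have hqd' : IsQuasiDeformation B (B ⊗[A] A') Q (algebraMap B (B ⊗[A] A'))
      ((algebraMap A' (B ⊗[A] A')).comp g) := hqd.baseChange hsur hker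
  exact hqd'.hasFiniteCIDim (hflatdim.tensorProduct_of_isPushout g)

/-- Ascent of complete intersection flat dimension. -/
theorem ascent_CIfd_of_surjective_ci (hsur : Function.Surjective (algebraMap R S))
    (hker : GeneratedByRegularSequence R (RingHom.ker (algebraMap R S)))
    
    (hfd : HasFiniteCIDim R M) :
    HasFiniteCIDim S M :=
  ascent_CIfd_of_surjective_ci_general hsur hker hfd
end
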